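/- arXiv:1506.05679 — 4 statements merged into one kernel-verified Lean document; each statement's English description precedes it below -/
import Mathlib

section
/- Let Λ be a ℤ-lattice in ℂ² and let σ be a ℂ-linear automorphism of ℂ² of finite order with σ(Λ) = Λ, which is non-symplectic (det_ℂ σ ≠ 1) and such that ⋀²(σ|_Λ) has prime order p. Let T = {x ∈ ⋀²Λ : ⋀²(σ|_Λ)(x) = x} be the invariant lattice and r = rank T. Then there exists a generator vol of the rank-1 free ℤ-module ⋀⁴Λ such that the associated wedge form b on ⋀²Λ restricted to T has signature (1, r−1), i.e. the real extension of b|_T is congruent to the diagonal form diag(1, −1, …, −1). -/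
set_option synthInstance.maxHeartbeats 1000000
set_option maxHeartbeats 1000000

open ExteriorAlgebra Module Matrix

noncomputable section

/-- `Λ` is a `ℤ`-lattice in `ℂ²`: it is the `ℤ`-span of an `ℝ`-basis of `ℂ²`. -/
def IsComplexTorusLattice (Λ : Submodule ℤ (ℂ × ℂ)) : Prop :=
  ∃ b : Basis (Fin 4) ℝ (ℂ × ℂ), Λ = Submodule.span ℤ (Set.range b)

/-- The image of the `n`-th exterior power under the algebra morphism induced by a linear map
lands in the `n`-th exterior power. -/
lemma map_mem_exteriorPower {R M N : Type*} [CommRing R] [AddCommGroup M] [Module R M]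
    [AddCommGroup N] [Module R N] (f : M →ₗ[R] N) (n : ℕ) {x : ExteriorAlgebra R M}
    (hx : x ∈ ⋀[R]^n M) : ExteriorAlgebra.map f x ∈ ⋀[R]^n N := by
  rw [← ExteriorAlgebra.ιMulti_span_fixedDegree] at hx ⊢
  induction hx using Submodule.span_induction with
  | mem y hy =>
      obtain ⟨m, rfl⟩ := hy
      rw [ExteriorAlgebra.map_apply_ιMulti]
      exact Submodule.subset_span ⟨f ∘ m, rfl⟩
  | zero => simp
  | add a b _ _ ha hb => rw [map_add]; exact Submodule.add_mem _ ha hb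
  | smul r a _ ha => rw [_root_.map_smul]; exact Submodule.smul_mem _ r ha

/-- The `n`-th exterior power of a linear map. -/
def extPowMap {R M N : Type*} [CommRing R] [AddCommGroup M] [Module R M]
    [AddCommGroup N] [Module R N] (n : ℕ) (f : M →ₗ[R] N) : ⋀[R]^n M →ₗ[R] ⋀[R]^n N :=
  LinearMap.restrict (ExteriorAlgebra.map f).toLinearMap
    (fun _ hx => map_mem_exteriorPower f n hx)

/-- The automorphism `σ` of `ℂ²` maps the lattice `Λ` onto itself. -/
def PreservesLattice (σ : (ℂ × ℂ) ≃ₗ[ℂ] (ℂ × ℂ)) (Λ : Submodule ℤ (ℂ × ℂ)) : Prop :=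
  Λ.map ((σ.restrictScalars ℤ : (ℂ × ℂ) ≃ₗ[ℤ] (ℂ × ℂ)) : (ℂ × ℂ) →ₗ[ℤ] (ℂ × ℂ)) = Λ

/-- The restriction `σ|_Λ` of `σ` to the lattice `Λ`, as a `ℤ`-linear automorphism. -/
def latRestrict (σ : (ℂ × ℂ) ≃ₗ[ℂ] (ℂ × ℂ)) (Λ : Submodule ℤ (ℂ × ℂ))
    (h : PreservesLattice σ Λ) : ↥Λ ≃ₗ[ℤ] ↥Λ :=
  (σ.restrictScalars ℤ).ofSubmodules Λ Λ h

/-- The induced endomorphism `⋀²(σ|_Λ)` of `⋀²Λ`. -/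
def extSq (σ : (ℂ × ℂ) ≃ₗ[ℂ] (ℂ × ℂ)) (Λ : Submodule ℤ (ℂ × ℂ))
    (h : PreservesLattice σ Λ) : Module.End ℤ (⋀[ℤ]^2 ↥Λ) :=
  extPowMap 2 (latRestrict σ Λ h).toLinearMap

/-- The invariant lattice `T = {x ∈ ⋀²Λ : ⋀²(σ|_Λ)(x) = x}`. -/
def invLat (σ : (ℂ × ℂ) ≃ₗ[ℂ] (ℂ × ℂ)) (Λ : Submodule ℤ (ℂ × ℂ))
    (h : PreservesLattice σ Λ) : Submodule ℤ (⋀[ℤ]^2 ↥Λ) :=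
  LinearMap.ker (extSq σ Λ h - LinearMap.id)

/-- `b` is the wedge form on `⋀²Λ` determined by the generator `vol` of `⋀⁴Λ`, i.e.
`x ∧ y = b(x,y) • vol`. -/
def IsWedgeForm (Λ : Submodule ℤ (ℂ × ℂ)) (vol : ⋀[ℤ]^4 ↥Λ)
    (b : ⋀[ℤ]^2 ↥Λ →ₗ[ℤ] ⋀[ℤ]^2 ↥Λ →ₗ[ℤ] ℤ) : Prop :=
  ∀ x y : ⋀[ℤ]^2 ↥Λ, (x : ExteriorAlgebra ℤ ↥Λ) * (y : ExteriorAlgebra ℤ ↥Λ)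
    = b x y • (vol : ExteriorAlgebra ℤ ↥Λ)

/-- The restriction of the form `b` to the submodule `T` admits Gram matrix `G`
in some basis; i.e. `(T, b|_T)` is isometric to the lattice with Gram matrix `G`. -/
def HasGramMatrix {M : Type*} [AddCommGroup M] [Module ℤ M] (b : M →ₗ[ℤ] M →ₗ[ℤ] ℤ)
    (T : Submodule ℤ M) {n : ℕ} (G : Matrix (Fin n) (Fin n) ℤ) : Prop :=
  ∃ v : Basis (Fin n) ℤ ↥T, ∀ i j, b (v i : M) (v j : M) = G i j

/-- A symmetric real bilinear form which is positive on a vector `ω` and negative definite on the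
orthogonal complement of `ω` has Gram matrix congruent to `diag(1, -1, …, -1)`. -/
lemma exists_congruent_diagonal_of_lorentzian {E : Type*} [AddCommGroup E] [Module ℝ E] {r : ℕ}
    (w : Basis (Fin r) ℝ E) (Q : LinearMap.BilinForm ℝ E) (hQ : ∀ x y, Q x y = Q y x)
    (ω : E) (hω : 0 < Q ω ω) (hneg : ∀ x, Q ω x = 0 → x ≠ 0 → Q x x < 0) :
    ∃ P : Matrix (Fin r) (Fin r) ℝ, IsUnit P.det ∧
      Pᵀ * (Matrix.of fun i j => Q (w i) (w j)) * P =
        Matrix.diagonal (fun i : Fin r => if (i : ℕ) = 0 then (1 : ℝ) else -1) := by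
  have hfin : Module.Finite ℝ E := Module.Finite.of_basis w
  have hpos : ∀ x, x ≠ 0 → 0 < 2 * Q ω x * Q ω x / Q ω ω - Q x x := by
    intro x hx
    set t := Q ω x / Q ω ω with ht
    have h0 : Q ω (x - t • ω) = 0 := by
      simp only [map_sub, map_smul, smul_eq_mul, ht]
      field_simp
      ring
    have hQx : Q (x - t • ω) (x - t • ω) = Q x x - t ^ 2 * Q ω ω := by
      have h1 : Q ω x = t * Q ω ω := by rw [ht]; field_simp
      simp only [map_sub, map_smul, LinearMap.sub_apply, LinearMap.smul_apply, smul_eq_mul,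
        hQ x ω, h1]
      ring
    have h2 : 2 * Q ω x * Q ω x / Q ω ω = 2 * (t ^ 2 * Q ω ω) := by
      rw [ht]; field_simp
    rw [h2]
    by_cases hy : x - t • ω = 0
    · rw [hy] at hQx
      simp only [map_zero] at hQx
      have ht0 : t ≠ 0 := by
        intro h
        apply hx
        simpa [h] using hy
      have : 0 < t ^ 2 * Q ω ω := by positivity
      linarith
    · have h3 := hneg _ h0 hy
      have : 0 ≤ t ^ 2 * Q ω ω := by positivity
      linarith
  let core : InnerProductSpace.Core ℝ E :=
    { inner := fun x y => 2 * Q ω x * Q ω y / Q ω ω - Q x y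
      conj_inner_symm := fun x y => by
        simp only [conj_trivial, hQ y x]; ring
      re_inner_nonneg := fun x => by
        by_cases hx : x = 0
        · simp [hx]
        · exact (hpos x hx).le
      add_left := fun x y z => by
        simp only [map_add, LinearMap.add_apply]; ring
      smul_left := fun x y c => by
        simp only [map_smul, LinearMap.smul_apply, smul_eq_mul, conj_trivial]; ring
      definite := fun x hx => by
        by_contra h
        exact (hpos x h).ne' hx }
  let : NormedAddCommGroup E := core.toNormedAddCommGroup
  let : InnerProductSpace ℝ E := InnerProductSpace.ofCore core.toCore
  have inner_def : ∀ x y : E, inner ℝ x y = 2 * Q ω x * Q ω y / Q ω ω - Q x y := fun _ _ => rfl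
  have hω0 : ω ≠ 0 := by
    rintro rfl
    simp at hω
  have hr : 0 < r := by
    rcases Nat.eq_zero_or_pos r with rfl | h
    · exact absurd (w.ext_elem (fun i => i.elim0)) hω0
    · exact h
  set s := Real.sqrt (Q ω ω) with hs
  have hs0 : 0 < s := Real.sqrt_pos.2 hω
  have hss : Q ω ω = s * s := (Real.mul_self_sqrt hω.le).symm
  let i₀ : Fin r := ⟨0, hr⟩
  have hnorm : ‖s⁻¹ • ω‖ = 1 := by
    have h1 : inner ℝ (s⁻¹ • ω) (s⁻¹ • ω) = (1 : ℝ) := by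
      rw [inner_def]
      simp only [map_smul, LinearMap.smul_apply, smul_eq_mul, hss]
      field_simp
      norm_num
    rw [real_inner_self_eq_norm_sq] at h1
    nlinarith [norm_nonneg (s⁻¹ • ω)]
  have hon : Orthonormal ℝ (({i₀} : Set (Fin r)).domRestrict fun _ => s⁻¹ • ω) := by
    refine ⟨fun i => hnorm, fun i j hij => ?_⟩
    exact absurd (Subsingleton.elim i j) hij
  obtain ⟨e, he⟩ := hon.exists_orthonormalBasis_extension_of_card_eq
    (by rw [finrank_eq_card_basis w])
  have he0 : e i₀ = s⁻¹ • ω := he i₀ rfl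
  have hω' : ω = s • e i₀ := by rw [he0, smul_smul, mul_inv_cancel₀ hs0.ne', one_smul]
  have hinner0 : ∀ x, inner ℝ (e i₀) x = s⁻¹ * Q ω x := by
    intro x
    rw [inner_def, he0]
    simp only [map_smul, LinearMap.smul_apply, smul_eq_mul, hss]
    field_simp
    ring
  have hQe : ∀ i j, Q (e i) (e j) =
      2 * inner ℝ (e i₀) (e i) * inner ℝ (e i₀) (e j) - inner ℝ (e i) (e j) := by
    intro i j
    rw [hinner0, hinner0, inner_def, hss]
    field_simp
    ring
  refine ⟨w.toMatrix e, ?_, ?_⟩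
  · have := w.isUnit_det e.toBasis
    rwa [Basis.det_apply, OrthonormalBasis.coe_toBasis] at this
  · have h1 : (Matrix.of fun i j => Q (w i) (w j)) = LinearMap.BilinForm.toMatrix w Q := by
      ext i j; simp [LinearMap.BilinForm.toMatrix_apply]
    have h2 := LinearMap.BilinForm.toMatrix_mul_basis_toMatrix (b := w) e.toBasis Q
    rw [OrthonormalBasis.coe_toBasis] at h2
    rw [h1, h2]
    ext i j
    rw [LinearMap.BilinForm.toMatrix_apply, OrthonormalBasis.coe_toBasis, hQe,
      Matrix.diagonal_apply]
    simp only [orthonormal_iff_ite.mp e.orthonormal]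
    have hi : ∀ k : Fin r, i₀ = k ↔ (k : ℕ) = 0 := fun k => by
      rw [Fin.ext_iff]; exact eq_comm
    simp only [hi]
    by_cases hij : i = j
    · subst hij
      by_cases h0 : (i : ℕ) = 0 <;> simp [h0]; norm_num
    · have : ¬ ((i : ℕ) = 0 ∧ (j : ℕ) = 0) := fun h => hij (Fin.ext (h.1.trans h.2.symm))
      by_cases h0 : (i : ℕ) = 0
      · have hj : (j : ℕ) ≠ 0 := fun h => this ⟨h0, h⟩
        simp [h0, hj, hij]
      · simp [h0, hij]

/-- The six-dimensional real space of pairs `(D, C, A, B)` of a `(2,0)`-part `D` and an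
anti-Hermitian `2 × 2` matrix with entries `A`, `B` on the diagonal and `C` off it. -/
abbrev HodgeSpace : Type := ℂ × ℂ × ℝ × ℝ

/-- The Hodge components of the bivector `u ∧ v` over `ℂ²`. -/
def hodgeWedge : (ℂ × ℂ) →ₗ[ℝ] (ℂ × ℂ) →ₗ[ℝ] HodgeSpace :=
  LinearMap.mk₂ ℝ (fun u v =>
    (u.1 * v.2 - u.2 * v.1,
      u.1 * (starRingEnd ℂ) v.2 - v.1 * (starRingEnd ℂ) u.2,
      u.1.im * v.1.re - u.1.re * v.1.im,
      u.2.im * v.2.re - u.2.re * v.2.im))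
    (fun u u' v => by
      ext <;> simp <;> ring)
    (fun c u v => by
      ext <;> simp <;> ring)
    (fun u v v' => by
      ext <;> simp <;> ring)
    (fun c u v => by
      ext <;> simp <;> ring)

lemma hodgeWedge_apply (u v : ℂ × ℂ) : hodgeWedge u v =
    (u.1 * v.2 - u.2 * v.1,
      u.1 * (starRingEnd ℂ) v.2 - v.1 * (starRingEnd ℂ) u.2,
      u.1.im * v.1.re - u.1.re * v.1.im,
      u.2.im * v.2.re - u.2.re * v.2.im) := rfl

/-- The wedge form in Hodge components. -/
def hodgeForm : LinearMap.BilinForm ℝ HodgeSpace :=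
  LinearMap.mk₂ ℝ (fun x y =>
    (x.1.re * y.1.re + x.1.im * y.1.im) - (x.2.1.re * y.2.1.re + x.2.1.im * y.2.1.im)
      + 2 * (x.2.2.1 * y.2.2.2 + x.2.2.2 * y.2.2.1))
    (fun x x' y => by simp; ring)
    (fun c x y => by simp; ring)
    (fun x y y' => by simp; ring)
    (fun c x y => by simp; ring)

lemma hodgeForm_apply (x y : HodgeSpace) : hodgeForm x y =
    (x.1.re * y.1.re + x.1.im * y.1.im) - (x.2.1.re * y.2.1.re + x.2.1.im * y.2.1.im)
      + 2 * (x.2.2.1 * y.2.2.2 + x.2.2.2 * y.2.2.1) := rfl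

lemma hodgeForm_comm (x y : HodgeSpace) : hodgeForm x y = hodgeForm y x := by
  simp only [hodgeForm_apply]; ring

/-- The wedge form is Lorentzian on the `(1,1)`-part. -/
lemma hodgeForm_self_neg {w x : HodgeSpace} (hw : w.1 = 0) (hx : x.1 = 0)
    (hpos : 0 < hodgeForm w w) (hort : hodgeForm w x = 0) (hx0 : x ≠ 0) :
    hodgeForm x x < 0 := by
  obtain ⟨z, ⟨c, d⟩, a, b⟩ := w
  obtain ⟨Z, ⟨C, D⟩, A, B⟩ := x
  simp only at hw hx
  subst hw hx
  simp only [hodgeForm_apply, Complex.zero_re, Complex.zero_im] at *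
  by_contra hcon
  push Not at hcon
  apply hx0
  have h1 : c * C + d * D = 2 * (a * B + b * A) := by linarith
  have h2 : c ^ 2 + d ^ 2 < 4 * (a * b) := by nlinarith
  have h3 : C ^ 2 + D ^ 2 ≤ 4 * (A * B) := by nlinarith
  have hab : 0 < a * b := by nlinarith [sq_nonneg c, sq_nonneg d]
  have h4 : (2 * (a * B + b * A)) ^ 2 ≤ (c ^ 2 + d ^ 2) * (C ^ 2 + D ^ 2) := by
    rw [← h1]; nlinarith [sq_nonneg (c * D - d * C)]
  have h5 : (2 * (a * B + b * A)) ^ 2 = 4 * (a * B - b * A) ^ 2 + 4 * (a * b) * (4 * (A * B)) := by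
    ring
  have h6 : 4 * (a * b) * (C ^ 2 + D ^ 2) ≤ 4 * (a * b) * (4 * (A * B)) :=
    mul_le_mul_of_nonneg_left h3 (by linarith)
  have h7 : 4 * (a * B - b * A) ^ 2 + (4 * (a * b) - (c ^ 2 + d ^ 2)) * (C ^ 2 + D ^ 2) ≤ 0 := by
    linarith
  have h8 : C ^ 2 + D ^ 2 = 0 := by
    by_contra hne
    have : 0 < C ^ 2 + D ^ 2 := lt_of_le_of_ne (by positivity) (Ne.symm hne)
    nlinarith [mul_pos (sub_pos.2 h2) this, sq_nonneg (a * B - b * A)]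
  have hC : C = 0 := by nlinarith [sq_nonneg C, sq_nonneg D]
  have hD : D = 0 := by nlinarith [sq_nonneg C, sq_nonneg D]
  have h9 : a * B - b * A = 0 := by
    rw [h8] at h7
    nlinarith [sq_nonneg (a * B - b * A)]
  rw [hC, hD] at h1
  have ha : a ≠ 0 := by rintro rfl; simp at hab
  have hb : b ≠ 0 := by rintro rfl; simp at hab
  have hB : B = 0 := by
    have : a * B = 0 := by linarith
    simpa [ha] using this
  have hA : A = 0 := by
    have : b * A = 0 := by linarith
    simpa [hb] using this
  subst hA hB hC hD
  rfl

/-- The standard real basis `(1,0), (i,0), (0,1), (0,i)` of `ℂ²`. -/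
def stdRealBasis : Basis (Fin 4) ℝ (ℂ × ℂ) :=
  (Complex.basisOneI.prod Complex.basisOneI).reindex finSumFinEquiv

lemma hodgeForm_hodgeWedge (u₁ u₂ u₃ u₄ : ℂ × ℂ) :
    hodgeForm (hodgeWedge u₁ u₂) (hodgeWedge u₃ u₄) =
      2 * stdRealBasis.det ![u₁, u₂, u₃, u₄] := by
  have h : ∀ v : Fin 4 → ℂ × ℂ, stdRealBasis.det v =
      Matrix.det !![(v 0).1.re, (v 1).1.re, (v 2).1.re, (v 3).1.re;
        (v 0).1.im, (v 1).1.im, (v 2).1.im, (v 3).1.im;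
        (v 0).2.re, (v 1).2.re, (v 2).2.re, (v 3).2.re;
        (v 0).2.im, (v 1).2.im, (v 2).2.im, (v 3).2.im] := by
    intro v
    rw [Basis.det_apply]
    congr 1
    have e0 : finSumFinEquiv.symm (0 : Fin (2 + 2)) = Sum.inl 0 := by decide
    have e1 : finSumFinEquiv.symm (1 : Fin (2 + 2)) = Sum.inl 1 := by decide
    have e2 : finSumFinEquiv.symm (2 : Fin (2 + 2)) = Sum.inr 0 := by decide
    have e3 : finSumFinEquiv.symm (3 : Fin (2 + 2)) = Sum.inr 1 := by decide
    ext i j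
    rw [Basis.toMatrix_apply, stdRealBasis, Basis.repr_reindex_apply]
    fin_cases i <;> fin_cases j <;> simp [e0, e1, e2, e3]
  rw [h, hodgeForm_apply, Matrix.det_succ_row_zero]
  simp [hodgeWedge_apply, Fin.sum_univ_succ, Matrix.det_fin_three, Fin.succAbove]
  ring

/-- The bivectors `u ∧ v` span the Hodge space. -/
lemma exists_sum_hodgeWedge (x : HodgeSpace) :
    ∃ u v : Fin 6 → ℂ × ℂ, ∑ i, hodgeWedge (u i) (v i) = x := by
  obtain ⟨⟨p, q⟩, ⟨c, d⟩, a, b⟩ := x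
  refine ⟨![(⟨0, a⟩, 0), (0, ⟨0, b⟩), (1, 0), (Complex.I, 0), (1, 0), (Complex.I, 0)],
    ![(1, 0), (0, 1), (0, ⟨(p + c) / 2, 0⟩), (0, ⟨0, (c - p) / 2⟩), (0, ⟨0, (q - d) / 2⟩),
      (0, ⟨(q + d) / 2, 0⟩)], ?_⟩
  simp [Fin.sum_univ_succ, hodgeWedge_apply]
  refine ⟨?_, ?_⟩ <;> apply Complex.ext <;> simp <;> ring

lemma hodgeWedge_fst_map (σ : (ℂ × ℂ) →ₗ[ℂ] (ℂ × ℂ)) (u v : ℂ × ℂ) :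
    (hodgeWedge (σ u) (σ v)).1 = LinearMap.det σ * (hodgeWedge u v).1 := by
  let e : Basis (Fin 2) ℂ (ℂ × ℂ) := Basis.finTwoProd ℂ
  have h : ∀ x y : ℂ × ℂ, (hodgeWedge x y).1 = e.det ![x, y] := by
    intro x y
    rw [Basis.det_apply, Matrix.det_fin_two]
    simp [hodgeWedge_apply, Basis.toMatrix_apply, e]
    ring
  have hc : ![σ u, σ v] = σ ∘ ![u, v] := by
    ext i : 1
    fin_cases i <;> rfl
  rw [h, h, hc, Basis.det_comp]

/-- The closed cone of semipositive `(1,1)`-classes. -/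
def semipositiveCone : Set HodgeSpace :=
  {x | x.1 = 0 ∧ x.2.2.1 ≤ 0 ∧ x.2.2.2 ≤ 0 ∧
    x.2.1.re ^ 2 + x.2.1.im ^ 2 ≤ 4 * (x.2.2.1 * x.2.2.2)}

lemma zero_mem_semipositiveCone : (0 : HodgeSpace) ∈ semipositiveCone := by
  simp [semipositiveCone]

lemma add_mem_semipositiveCone {x y : HodgeSpace} (hx : x ∈ semipositiveCone)
    (hy : y ∈ semipositiveCone) : x + y ∈ semipositiveCone := by
  obtain ⟨z, ⟨c, d⟩, a, b⟩ := x
  obtain ⟨Z, ⟨C, D⟩, A, B⟩ := y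
  obtain ⟨h1, h2, h3, h4⟩ := hx
  obtain ⟨H1, H2, H3, H4⟩ := hy
  simp only at h1 h2 h3 h4 H1 H2 H3 H4
  refine ⟨by simp [h1, H1], by simpa using add_nonpos h2 H2, by simpa using add_nonpos h3 H3, ?_⟩
  simp only [Prod.fst_add, Prod.snd_add, Complex.add_re, Complex.add_im]
  have hs : 0 ≤ a * B + A * b :=
    add_nonneg (mul_nonneg_of_nonpos_of_nonpos h2 H3) (mul_nonneg_of_nonpos_of_nonpos H2 h3)
  have hp : (c ^ 2 + d ^ 2) * (C ^ 2 + D ^ 2) ≤ 4 * (a * b) * (4 * (A * B)) :=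
    mul_le_mul h4 H4 (by positivity) (by nlinarith [sq_nonneg c, sq_nonneg d])
  have hq : (c * C + d * D) ^ 2 ≤ (2 * (a * B + A * b)) ^ 2 := by
    nlinarith [sq_nonneg (c * D - d * C), sq_nonneg (a * B - A * b)]
  have := abs_le_of_sq_le_sq' hq (by linarith)
  nlinarith [this.2]

lemma hodgeWedge_I_smul_mem_semipositiveCone (v : ℂ × ℂ) :
    hodgeWedge v (Complex.I • v) ∈ semipositiveCone := by
  obtain ⟨⟨a, b⟩, ⟨c, d⟩⟩ := v
  refine ⟨?_, ?_, ?_, ?_⟩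
  · simp [hodgeWedge_apply]; ring
  · simp [hodgeWedge_apply]; nlinarith [sq_nonneg a, sq_nonneg b]
  · simp [hodgeWedge_apply]; nlinarith [sq_nonneg c, sq_nonneg d]
  · simp [hodgeWedge_apply]; ring_nf; rfl

/-- Adding a semipositive class to the standard Kähler class gives a class of positive square. -/
lemma hodgeForm_add_pos {x : HodgeSpace} (hx : x ∈ semipositiveCone) :
    0 < hodgeForm (((0, 0, -1, -1) : HodgeSpace) + x) ((0, 0, -1, -1) + x) := by
  obtain ⟨z, ⟨c, d⟩, a, b⟩ := x
  obtain ⟨h1, h2, h3, h4⟩ := hx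
  simp only at h1 h2 h3 h4
  subst h1
  simp [hodgeForm_apply]
  nlinarith

/-- The alternating map `(u, v) ↦ u ∧ v` on a lattice, in Hodge components. -/
def hodgeAlternating (Λ : Submodule ℤ (ℂ × ℂ)) : ↥Λ [⋀^Fin 2]→ₗ[ℤ] HodgeSpace where
  toFun v := hodgeWedge (v 0) (v 1)
  map_update_add' v i x y := by
    fin_cases i <;> simp [Function.update]
  map_update_smul' v i c x := by
    fin_cases i <;> simp [Function.update, -zsmul_eq_mul]
  map_eq_zero_of_eq' v i j h hij := by
    have h01 : v 0 = v 1 := by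
      fin_cases i <;> fin_cases j <;> simp_all
    rw [h01]
    ext <;> simp [hodgeWedge_apply] <;> ring

/-- The map from `⋀²Λ` to the Hodge space. -/
def hodgeMap (Λ : Submodule ℤ (ℂ × ℂ)) : ⋀[ℤ]^2 ↥Λ →ₗ[ℤ] HodgeSpace :=
  exteriorPower.alternatingMapLinearEquiv (hodgeAlternating Λ)

lemma hodgeMap_ιMulti (Λ : Submodule ℤ (ℂ × ℂ)) (v : Fin 2 → ↥Λ) :
    hodgeMap Λ (exteriorPower.ιMulti ℤ 2 v) = hodgeWedge (v 0) (v 1) := by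
  rw [hodgeMap, exteriorPower.alternatingMapLinearEquiv_apply_ιMulti]
  rfl

lemma extSq_ιMulti (σ : (ℂ × ℂ) ≃ₗ[ℂ] (ℂ × ℂ)) (Λ : Submodule ℤ (ℂ × ℂ))
    (h : PreservesLattice σ Λ) (v : Fin 2 → ↥Λ) :
    extSq σ Λ h (exteriorPower.ιMulti ℤ 2 v) =
      exteriorPower.ιMulti ℤ 2 (latRestrict σ Λ h ∘ v) :=
  Subtype.ext (ExteriorAlgebra.map_apply_ιMulti (latRestrict σ Λ h).toLinearMap v)

lemma coe_latRestrict (σ : (ℂ × ℂ) ≃ₗ[ℂ] (ℂ × ℂ)) (Λ : Submodule ℤ (ℂ × ℂ))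
    (h : PreservesLattice σ Λ) (u : ↥Λ) : (latRestrict σ Λ h u : ℂ × ℂ) = σ u := rfl

lemma coe_latRestrict_iterate (σ : (ℂ × ℂ) ≃ₗ[ℂ] (ℂ × ℂ)) (Λ : Submodule ℤ (ℂ × ℂ))
    (h : PreservesLattice σ Λ) (k : ℕ) (u : ↥Λ) :
    (((latRestrict σ Λ h)^[k] u : ↥Λ) : ℂ × ℂ) = (σ ^ k) u := by
  induction k with
  | zero => rfl
  | succ k ih => rw [Function.iterate_succ_apply', coe_latRestrict, ih, pow_succ']; rfl

lemma extSq_pow_ιMulti (σ : (ℂ × ℂ) ≃ₗ[ℂ] (ℂ × ℂ)) (Λ : Submodule ℤ (ℂ × ℂ))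
    (h : PreservesLattice σ Λ) (k : ℕ) (v : Fin 2 → ↥Λ) :
    (extSq σ Λ h ^ k) (exteriorPower.ιMulti ℤ 2 v) =
      exteriorPower.ιMulti ℤ 2 (fun i => (latRestrict σ Λ h)^[k] (v i)) := by
  induction k with
  | zero => rfl
  | succ k ih =>
    rw [pow_succ', Module.End.mul_apply, ih, extSq_ιMulti]
    congr 1
    ext i : 1
    simp only [Function.comp_apply, Function.iterate_succ_apply']

lemma extSq_pow_eq_one (σ : (ℂ × ℂ) ≃ₗ[ℂ] (ℂ × ℂ)) (Λ : Submodule ℤ (ℂ × ℂ))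
    (h : PreservesLattice σ Λ) {n : ℕ} (hn : σ ^ n = 1) : extSq σ Λ h ^ n = 1 := by
  apply exteriorPower.linearMap_ext
  ext1 v
  simp only [LinearMap.compAlternatingMap_apply, extSq_pow_ιMulti, Module.End.one_apply]
  congr 1
  ext1 i
  apply Subtype.ext
  rw [coe_latRestrict_iterate, hn]
  rfl

lemma hodgeMap_extSq_fst (σ : (ℂ × ℂ) ≃ₗ[ℂ] (ℂ × ℂ)) (Λ : Submodule ℤ (ℂ × ℂ))
    (h : PreservesLattice σ Λ) (x : ⋀[ℤ]^2 ↥Λ) :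
    (hodgeMap Λ (extSq σ Λ h x)).1 =
      LinearMap.det (σ : (ℂ × ℂ) →ₗ[ℂ] (ℂ × ℂ)) * (hodgeMap Λ x).1 := by
  have hx : x ∈ Submodule.span ℤ (Set.range (exteriorPower.ιMulti ℤ 2 (M := ↥Λ))) := by
    rw [exteriorPower.ιMulti_span]; trivial
  induction hx using Submodule.span_induction with
  | mem x hx =>
    obtain ⟨v, rfl⟩ := hx
    rw [extSq_ιMulti, hodgeMap_ιMulti, hodgeMap_ιMulti, ← hodgeWedge_fst_map]
    rfl
  | zero => simp
  | add x y _ _ hx hy => simp only [map_add, Prod.fst_add, hx, hy, mul_add]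
  | smul c x _ hx => simp only [map_smul, Prod.smul_fst, hx, mul_smul_comm]

lemma hodgeMap_fst_eq_zero_of_mem_invLat (σ : (ℂ × ℂ) ≃ₗ[ℂ] (ℂ × ℂ)) (Λ : Submodule ℤ (ℂ × ℂ))
    (h : PreservesLattice σ Λ) (hns : LinearMap.det (σ : (ℂ × ℂ) →ₗ[ℂ] (ℂ × ℂ)) ≠ 1)
    {x : ⋀[ℤ]^2 ↥Λ} (hx : x ∈ invLat σ Λ h) : (hodgeMap Λ x).1 = 0 := by
  have h1 : extSq σ Λ h x = x := by
    rw [invLat, LinearMap.mem_ker, LinearMap.sub_apply, LinearMap.id_apply, sub_eq_zero] at hx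
    exact hx
  have h2 := hodgeMap_extSq_fst σ Λ h x
  rw [h1] at h2
  by_contra h0
  exact hns (mul_right_cancel₀ h0 (by rw [← h2, one_mul]))

/-- A bilinear map takes values in a subspace if it does so on a basis. -/
lemma bilinear_mem_of_basis {ι V W : Type*} [AddCommGroup V] [Module ℝ V] [AddCommGroup W]
    [Module ℝ W] (b : Basis ι ℝ V) (β : V →ₗ[ℝ] V →ₗ[ℝ] W) (S : Submodule ℝ W)
    (h : ∀ i j, β (b i) (b j) ∈ S) (u v : V) : β u v ∈ S := by
  induction b.mem_span u using Submodule.span_induction with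
  | zero => simp
  | add x y _ _ hx hy => simpa using S.add_mem hx hy
  | smul c x _ hx => simpa using S.smul_mem c hx
  | mem x hx =>
    obtain ⟨i, rfl⟩ := hx
    induction b.mem_span v using Submodule.span_induction with
    | zero => simp
    | add x y _ _ hx hy => simpa using S.add_mem hx hy
    | smul c x _ hx => simpa using S.smul_mem c hx
    | mem x hx =>
      obtain ⟨j, rfl⟩ := hx
      exact h i j

/-- The `n`-th exterior power of a module with basis indexed by `Fin n` is generated by the wedge
of the basis vectors. -/
lemma eq_det_smul_ιMulti_basis {R M : Type*} [CommRing R] [AddCommGroup M] [Module R M] {n : ℕ}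
    (e : Basis (Fin n) R M) (z : ⋀[R]^n M) :
    z = exteriorPower.alternatingMapLinearEquiv e.det z • exteriorPower.ιMulti R n e := by
  have h : (LinearMap.id : ⋀[R]^n M →ₗ[R] ⋀[R]^n M) =
      (exteriorPower.alternatingMapLinearEquiv e.det).smulRight (exteriorPower.ιMulti R n e) := by
    apply exteriorPower.linearMap_ext
    refine Basis.ext_alternating e fun v hv => ?_
    let τ : Equiv.Perm (Fin n) := Equiv.ofBijective v (Finite.injective_iff_bijective.1 hv)
    have hτ : (fun i => e (v i)) = e ∘ τ := rfl
    rw [hτ, AlternatingMap.map_perm, AlternatingMap.map_perm]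
    simp [exteriorPower.alternatingMapLinearEquiv_apply_ιMulti, Basis.det_self]
  exact LinearMap.congr_fun h z

/-- The wedge product `⋀²M × ⋀²M → ⋀⁴M`. -/
def wedgeTwoTwo (R M : Type*) [CommRing R] [AddCommGroup M] [Module R M] :
    ⋀[R]^2 M →ₗ[R] ⋀[R]^2 M →ₗ[R] ⋀[R]^4 M :=
  LinearMap.mk₂ R
    (fun x y => ⟨(x : ExteriorAlgebra R M) * y, SetLike.mul_mem_graded (i := 2) (j := 2) x.2 y.2⟩)
    (fun _ _ _ => Subtype.ext (add_mul _ _ _))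
    (fun _ _ _ => Subtype.ext (smul_mul_assoc _ _ _))
    (fun _ _ _ => Subtype.ext (mul_add _ _ _))
    (fun _ _ _ => Subtype.ext (mul_smul_comm _ _ _))

lemma coe_wedgeTwoTwo {R M : Type*} [CommRing R] [AddCommGroup M] [Module R M]
    (x y : ⋀[R]^2 M) : (wedgeTwoTwo R M x y : ExteriorAlgebra R M) = x * y := rfl

lemma wedgeTwoTwo_ιMulti {R M : Type*} [CommRing R] [AddCommGroup M] [Module R M]
    (u v : Fin 2 → M) :
    wedgeTwoTwo R M (exteriorPower.ιMulti R 2 u) (exteriorPower.ιMulti R 2 v) =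
      exteriorPower.ιMulti R 4 ![u 0, u 1, v 0, v 1] := by
  apply Subtype.ext
  rw [coe_wedgeTwoTwo]
  simp [ExteriorAlgebra.ιMulti_apply, mul_assoc, Matrix.vecTail]

/-- The wedge form on `⋀²M` with respect to the generator of `⋀⁴M` given by a basis of `M`. -/
def basisWedgeForm {R M : Type*} [CommRing R] [AddCommGroup M] [Module R M]
    (e : Basis (Fin 4) R M) : ⋀[R]^2 M →ₗ[R] ⋀[R]^2 M →ₗ[R] R :=
  (wedgeTwoTwo R M).compr₂ (exteriorPower.alternatingMapLinearEquiv e.det)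

lemma basisWedgeForm_ιMulti {R M : Type*} [CommRing R] [AddCommGroup M] [Module R M]
    (e : Basis (Fin 4) R M) (u v : Fin 2 → M) :
    basisWedgeForm e (exteriorPower.ιMulti R 2 u) (exteriorPower.ιMulti R 2 v) =
      e.det ![u 0, u 1, v 0, v 1] := by
  rw [basisWedgeForm, LinearMap.compr₂_apply, wedgeTwoTwo_ιMulti,
    exteriorPower.alternatingMapLinearEquiv_apply_ιMulti]

lemma wedgeTwoTwo_eq_smul {R M : Type*} [CommRing R] [AddCommGroup M] [Module R M]
    (e : Basis (Fin 4) R M) (x y : ⋀[R]^2 M) :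
    wedgeTwoTwo R M x y = basisWedgeForm e x y • exteriorPower.ιMulti R 4 e :=
  eq_det_smul_ιMulti_basis e _

lemma det_restrictScalars_int {V : Type*} [AddCommGroup V] [Module ℝ V]
    (b : Basis (Fin 4) ℝ V) (v : Fin 4 → ↥(Submodule.span ℤ (Set.range b))) :
    (((b.restrictScalars ℤ).det v : ℤ) : ℝ) = b.det (fun i => (v i : V)) := by
  rw [Basis.det_apply, Basis.det_apply, Int.cast_det]
  congr 1
  ext i j
  have := b.restrictScalars_repr_apply ℤ (v j) i
  simpa [Basis.toMatrix_apply] using this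

lemma hodgeForm_hodgeMap (b : Basis (Fin 4) ℝ (ℂ × ℂ))
    (x y : ⋀[ℤ]^2 ↥(Submodule.span ℤ (Set.range b))) :
    hodgeForm (hodgeMap _ x) (hodgeMap _ y) =
      2 * stdRealBasis.det b * (basisWedgeForm (b.restrictScalars ℤ) x y : ℤ) := by
  have hx : x ∈ Submodule.span ℤ (Set.range (exteriorPower.ιMulti ℤ 2
      (M := ↥(Submodule.span ℤ (Set.range b))))) := by
    rw [exteriorPower.ιMulti_span]; trivial
  have hy : y ∈ Submodule.span ℤ (Set.range (exteriorPower.ιMulti ℤ 2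
      (M := ↥(Submodule.span ℤ (Set.range b))))) := by
    rw [exteriorPower.ιMulti_span]; trivial
  induction hx using Submodule.span_induction with
  | mem x hx =>
    obtain ⟨u, rfl⟩ := hx
    induction hy using Submodule.span_induction with
    | mem y hy =>
      obtain ⟨v, rfl⟩ := hy
      rw [hodgeMap_ιMulti, hodgeMap_ιMulti, hodgeForm_hodgeWedge, basisWedgeForm_ιMulti,
        det_restrictScalars_int, AlternatingMap.eq_smul_basis_det b stdRealBasis.det,
        AlternatingMap.smul_apply, smul_eq_mul, AlternatingMap.smul_apply, Basis.det_self,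
        smul_eq_mul, mul_one, mul_assoc]
      congr 3
      ext1 i
      fin_cases i <;> rfl
    | zero => simp
    | add y y' _ _ h h' => simp only [map_add, h, h', Int.cast_add, mul_add]
    | smul c y _ h =>
      rw [(hodgeMap _).map_smul, map_zsmul, (basisWedgeForm _ _).map_smul, h, zsmul_eq_mul,
        smul_eq_mul, Int.cast_mul]
      ring
  | zero => simp
  | add y y' _ _ h h' => simp only [map_add, LinearMap.add_apply, h, h', Int.cast_add, mul_add]
  | smul c y _ h =>
    rw [(hodgeMap _).map_smul, map_zsmul, (basisWedgeForm _).map_smul, LinearMap.smul_apply,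
      LinearMap.smul_apply, h, zsmul_eq_mul, smul_eq_mul, Int.cast_mul]
    ring

open TensorProduct in
lemma hodgeMap_liftBaseChange_injective (b : Basis (Fin 4) ℝ (ℂ × ℂ)) :
    Function.Injective ((hodgeMap (Submodule.span ℤ (Set.range b))).liftBaseChange ℝ) := by
  have : Module.Free ℤ ↥(Submodule.span ℤ (Set.range b)) := .of_basis (b.restrictScalars ℤ)
  have : Module.Finite ℤ ↥(Submodule.span ℤ (Set.range b)) := .of_basis (b.restrictScalars ℤ)
  have hrank : finrank ℝ (ℝ ⊗[ℤ] ⋀[ℤ]^2 ↥(Submodule.span ℤ (Set.range b))) =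
      finrank ℝ HodgeSpace := by
    rw [Module.finrank_baseChange, exteriorPower.finrank_eq,
      finrank_eq_card_basis (b.restrictScalars ℤ)]
    simp [Nat.choose]
  rw [LinearMap.injective_iff_surjective_of_finrank_eq_finrank hrank, ← LinearMap.range_eq_top,
    eq_top_iff]
  rintro x -
  obtain ⟨u, v, rfl⟩ := exists_sum_hodgeWedge x
  refine Submodule.sum_mem _ fun k _ => bilinear_mem_of_basis b _ _ (fun i j => ?_) _ _
  refine ⟨1 ⊗ₜ exteriorPower.ιMulti ℤ 2 ![b.restrictScalars ℤ i, b.restrictScalars ℤ j], ?_⟩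
  simp [hodgeMap_ιMulti]

/-- The class `∑ₖ σᵏu ∧ σᵏv` as a bilinear function of `u` and `v`. -/
def averagedWedge (σ : (ℂ × ℂ) ≃ₗ[ℂ] (ℂ × ℂ)) (n : ℕ) :
    (ℂ × ℂ) →ₗ[ℝ] (ℂ × ℂ) →ₗ[ℝ] HodgeSpace :=
  ∑ k ∈ Finset.range n, hodgeWedge.compl₁₂
    (((σ ^ k : (ℂ × ℂ) ≃ₗ[ℂ] (ℂ × ℂ)) : (ℂ × ℂ) →ₗ[ℂ] (ℂ × ℂ)).restrictScalars ℝ)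
    (((σ ^ k : (ℂ × ℂ) ≃ₗ[ℂ] (ℂ × ℂ)) : (ℂ × ℂ) →ₗ[ℂ] (ℂ × ℂ)).restrictScalars ℝ)

lemma averagedWedge_apply (σ : (ℂ × ℂ) ≃ₗ[ℂ] (ℂ × ℂ)) (n : ℕ) (u v : ℂ × ℂ) :
    averagedWedge σ n u v = ∑ k ∈ Finset.range n, hodgeWedge ((σ ^ k) u) ((σ ^ k) v) := by
  simp [averagedWedge, LinearMap.sum_apply]

/-- The invariant Kähler class has positive square. -/
lemma hodgeForm_averagedWedge_pos (σ : (ℂ × ℂ) ≃ₗ[ℂ] (ℂ × ℂ)) {n : ℕ} (hn : 0 < n) :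
    0 < hodgeForm
      (averagedWedge σ n (1, 0) (Complex.I • (1, 0)) + averagedWedge σ n (0, 1) (Complex.I • (0, 1)))
      (averagedWedge σ n (1, 0) (Complex.I • (1, 0)) +
        averagedWedge σ n (0, 1) (Complex.I • (0, 1))) := by
  obtain ⟨m, rfl⟩ := Nat.exists_eq_add_of_lt hn
  have hmem : ∀ v : ℂ × ℂ, ∑ k ∈ Finset.range m,
      hodgeWedge ((σ ^ (k + 1)) v) ((σ ^ (k + 1)) (Complex.I • v)) ∈ semipositiveCone := by
    intro v
    refine Finset.sum_induction _ (· ∈ semipositiveCone) (fun _ _ => add_mem_semipositiveCone)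
      zero_mem_semipositiveCone fun k _ => ?_
    rw [map_smul]
    exact hodgeWedge_I_smul_mem_semipositiveCone _
  have key := hodgeForm_add_pos (add_mem_semipositiveCone (hmem (1, 0)) (hmem (0, 1)))
  have h0 : ((0, 0, -1, -1) : HodgeSpace) = hodgeWedge (1, 0) (Complex.I • (1, 0)) +
      hodgeWedge (0, 1) (Complex.I • (0, 1)) := by
    simp [hodgeWedge_apply]
  have h1 : ∀ v : ℂ × ℂ, averagedWedge σ (0 + m + 1) v (Complex.I • v) =
      hodgeWedge v (Complex.I • v) + ∑ k ∈ Finset.range m,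
        hodgeWedge ((σ ^ (k + 1)) v) ((σ ^ (k + 1)) (Complex.I • v)) := by
    intro v
    rw [averagedWedge_apply, zero_add, Finset.sum_range_succ', add_comm]
    rfl
  rw [h0] at key
  rw [h1, h1, add_add_add_comm]
  exact key

open TensorProduct in
lemma averagedWedge_mem_range (b : Basis (Fin 4) ℝ (ℂ × ℂ)) (σ : (ℂ × ℂ) ≃ₗ[ℂ] (ℂ × ℂ))
    (h : PreservesLattice σ (Submodule.span ℤ (Set.range b))) {n : ℕ} (hn : σ ^ n = 1)
    (u v : ℂ × ℂ) :
    averagedWedge σ n u v ∈ LinearMap.range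
      ((hodgeMap (Submodule.span ℤ (Set.range b)) ∘ₗ (invLat σ _ h).subtype).liftBaseChange ℝ) := by
  refine bilinear_mem_of_basis b _ _ (fun i j => ?_) _ _
  set f := extSq σ _ h with hf
  have hmem : ∀ x, (∑ k ∈ Finset.range n, f ^ k) x ∈ invLat σ _ h := by
    intro x
    rw [invLat, LinearMap.mem_ker, ← hf]
    change ((f - 1) * ∑ k ∈ Finset.range n, f ^ k) x = 0
    rw [mul_geom_sum, hf, extSq_pow_eq_one σ _ h hn, sub_self]
    rfl
  refine ⟨1 ⊗ₜ ⟨_, hmem (exteriorPower.ιMulti ℤ 2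
    ![b.restrictScalars ℤ i, b.restrictScalars ℤ j])⟩, ?_⟩
  rw [LinearMap.liftBaseChange_tmul, one_smul]
  change hodgeMap _ ((∑ k ∈ Finset.range n, f ^ k) _) = _
  rw [LinearMap.sum_apply, map_sum, averagedWedge_apply]
  refine Finset.sum_congr rfl fun k _ => ?_
  rw [hf, extSq_pow_ιMulti, hodgeMap_ιMulti, coe_latRestrict_iterate, coe_latRestrict_iterate]
  simp

set_option maxHeartbeats 4000000 in
/-- The signature of the invariant lattice, with its rank as a free parameter. -/
lemma exists_wedgeForm_invLat_congruent_diagonal (Λ : Submodule ℤ (ℂ × ℂ))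
    (hΛ : IsComplexTorusLattice Λ) (σ : (ℂ × ℂ) ≃ₗ[ℂ] (ℂ × ℂ)) (hord : IsOfFinOrder σ)
    (hσΛ : PreservesLattice σ Λ) (hns : LinearMap.det (σ : (ℂ × ℂ) →ₗ[ℂ] (ℂ × ℂ)) ≠ 1)
    (r : ℕ) (hr : Module.finrank ℤ ↥(invLat σ Λ hσΛ) = r) :
    ∃ vol : ⋀[ℤ]^4 ↥Λ, Submodule.span ℤ {vol} = ⊤ ∧
      ∃ b : ⋀[ℤ]^2 ↥Λ →ₗ[ℤ] ⋀[ℤ]^2 ↥Λ →ₗ[ℤ] ℤ, IsWedgeForm Λ vol b ∧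
        ∃ v : Basis (Fin r) ℤ ↥(invLat σ Λ hσΛ), ∃ P : Matrix (Fin r) (Fin r) ℝ,
          IsUnit P.det ∧
            Pᵀ * (Matrix.of fun i j =>
                ((b (v i : ⋀[ℤ]^2 ↥Λ) (v j : ⋀[ℤ]^2 ↥Λ) : ℤ) : ℝ)) * P =
              Matrix.diagonal (fun i : Fin r => if (i : ℕ) = 0 then (1 : ℝ) else -1) := by
  obtain ⟨B, rfl⟩ := hΛ
  obtain ⟨n, hn, hσn⟩ := isOfFinOrder_iff_pow_eq_one.1 hord
  set Λ := Submodule.span ℤ (Set.range B)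
  have : Module.Free ℤ ↥Λ := .of_basis (B.restrictScalars ℤ)
  have : Module.Finite ℤ ↥Λ := .of_basis (B.restrictScalars ℤ)
  set T := invLat σ Λ hσΛ
  have hdet : stdRealBasis.det B ≠ 0 := (stdRealBasis.isUnit_det B).ne_zero
  obtain ⟨ε, hε, hεpos⟩ : ∃ ε : ℤ, ε * ε = 1 ∧ 0 < 2 * stdRealBasis.det B * ε := by
    rcases lt_or_gt_of_ne hdet with h | h
    · exact ⟨-1, by norm_num, by push_cast; linarith⟩
    · exact ⟨1, by norm_num, by push_cast; linarith⟩
  set c := 2 * stdRealBasis.det B * ε with hc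
  let F : TensorProduct ℤ ℝ ↥T →ₗ[ℝ] HodgeSpace := (hodgeMap Λ ∘ₗ T.subtype).liftBaseChange ℝ
  have hFinj : Function.Injective F := by
    have h1 := Module.Flat.lTensor_preserves_injective_linearMap (M := ℝ) T.subtype
      T.injective_subtype
    have h2 : ∀ x, F x = (hodgeMap Λ).liftBaseChange ℝ (T.subtype.lTensor ℝ x) := by
      intro x
      induction x using TensorProduct.induction_on with
      | zero => simp
      | tmul r x => simp [F]
      | add x y hx hy => rw [map_add, map_add, map_add, hx, hy]
    intro x y hxy
    rw [h2, h2] at hxy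
    exact h1 (hodgeMap_liftBaseChange_injective B hxy)
  have hFfst : ∀ x, (F x).1 = 0 := by
    intro x
    induction x using TensorProduct.induction_on with
    | zero => simp
    | tmul r x =>
      simp [F, hodgeMap_fst_eq_zero_of_mem_invLat σ Λ hσΛ hns x.2]
    | add x y hx hy => rw [map_add, Prod.fst_add, hx, hy, add_zero]
  obtain ⟨ω, hω⟩ : averagedWedge σ n (1, 0) (Complex.I • (1, 0)) +
      averagedWedge σ n (0, 1) (Complex.I • (0, 1)) ∈ LinearMap.range F :=
    Submodule.add_mem _ (averagedWedge_mem_range B σ hσΛ hσn _ _)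
      (averagedWedge_mem_range B σ hσΛ hσn _ _)
  have hωpos : 0 < hodgeForm (F ω) (F ω) := by
    rw [hω]; exact hodgeForm_averagedWedge_pos σ hn
  let v : Basis (Fin r) ℤ ↥T := (Module.finBasis ℤ ↥T).reindex (finCongr hr)
  let Q : LinearMap.BilinForm ℝ (TensorProduct ℤ ℝ ↥T) := c⁻¹ • hodgeForm.compl₁₂ F F
  have hQ : ∀ x y, Q x y = c⁻¹ * hodgeForm (F x) (F y) := fun x y => rfl
  obtain ⟨P, hP, hPQ⟩ := exists_congruent_diagonal_of_lorentzian (v.baseChange ℝ) Q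
    (fun x y => by rw [hQ, hQ, hodgeForm_comm]) ω (by rw [hQ]; positivity)
    (fun x h0 hx => by
      rw [hQ] at h0 ⊢
      have h0' := (mul_eq_zero.1 h0).resolve_left (inv_ne_zero hεpos.ne')
      have := hodgeForm_self_neg (hFfst ω) (hFfst x) hωpos h0'
        (fun h => hx (hFinj (by rw [h, map_zero])))
      exact mul_neg_of_pos_of_neg (inv_pos.2 hεpos) this)
  have hvol := eq_det_smul_ιMulti_basis (B.restrictScalars ℤ)
  refine ⟨ε • exteriorPower.ιMulti ℤ 4 (B.restrictScalars ℤ), ?_,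
    ε • basisWedgeForm (B.restrictScalars ℤ), ?_, v, P, hP, ?_⟩
  · rw [eq_top_iff]
    rintro z -
    rw [Submodule.mem_span_singleton]
    refine ⟨exteriorPower.alternatingMapLinearEquiv (B.restrictScalars ℤ).det z * ε, ?_⟩
    rw [smul_smul, mul_assoc, hε, mul_one]
    exact (hvol z).symm
  · intro x y
    have h1 := congrArg (Subtype.val) (wedgeTwoTwo_eq_smul (B.restrictScalars ℤ) x y)
    rw [coe_wedgeTwoTwo] at h1
    rw [h1, ← Submodule.coe_smul, smul_smul, LinearMap.smul_apply, LinearMap.smul_apply,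
      smul_eq_mul, mul_right_comm, hε, one_mul]
  · rw [← hPQ]
    congr 2
    ext i j
    rw [Matrix.of_apply, Matrix.of_apply, hQ]
    have h1 : ∀ i, F (v.baseChange ℝ i) = hodgeMap Λ (v i) := by
      intro i
      simp [F]
    rw [h1, h1, hodgeForm_hodgeMap, LinearMap.smul_apply, LinearMap.smul_apply, smul_eq_mul,
      Int.cast_mul, eq_inv_mul_iff_mul_eq₀ hεpos.ne', hc]
    have hε0 : (ε : ℝ) * ε = 1 := by exact_mod_cast hε
    linear_combination (2 * stdRealBasis.det B *
      (basisWedgeForm (B.restrictScalars ℤ) (v i) (v j) : ℤ)) * hε0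

/-- If `σ` is a non-symplectic automorphism of finite order of the `2`-torus `ℂ²/Λ` whose
action on `⋀²Λ` has prime order `p`, then for some generator `vol` of `⋀⁴Λ` the associated
wedge form, restricted to the invariant lattice `T`, has signature `(1, r-1)`: its real Gram
matrix is congruent to `diag(1, -1, …, -1)`. -/
theorem stmt_5 (Λ : Submodule ℤ (ℂ × ℂ)) (hΛ : IsComplexTorusLattice Λ)
    (σ : (ℂ × ℂ) ≃ₗ[ℂ] (ℂ × ℂ)) (hord : IsOfFinOrder σ) (hσΛ : PreservesLattice σ Λ)
    (hns : LinearMap.det (σ : (ℂ × ℂ) →ₗ[ℂ] (ℂ × ℂ)) ≠ 1)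
    (p : ℕ) (hp : p.Prime) (hordp : orderOf (extSq σ Λ hσΛ) = p) :
    ∃ vol : ⋀[ℤ]^4 ↥Λ, Submodule.span ℤ {vol} = ⊤ ∧
      ∃ b : ⋀[ℤ]^2 ↥Λ →ₗ[ℤ] ⋀[ℤ]^2 ↥Λ →ₗ[ℤ] ℤ, IsWedgeForm Λ vol b ∧
        ∃ v : Basis (Fin (Module.finrank ℤ ↥(invLat σ Λ hσΛ))) ℤ ↥(invLat σ Λ hσΛ),
          ∃ P : Matrix (Fin (Module.finrank ℤ ↥(invLat σ Λ hσΛ)))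
              (Fin (Module.finrank ℤ ↥(invLat σ Λ hσΛ))) ℝ,
            IsUnit P.det ∧
              Pᵀ * (Matrix.of fun i j =>
                  ((b (v i : ⋀[ℤ]^2 ↥Λ) (v j : ⋀[ℤ]^2 ↥Λ) : ℤ) : ℝ)) * P =
                Matrix.diagonal (fun i : Fin (Module.finrank ℤ ↥(invLat σ Λ hσΛ)) =>
                  if (i : ℕ) = 0 then (1 : ℝ) else -1) := by
  exact exists_wedgeForm_invLat_congruent_diagonal Λ hΛ σ hord hσΛ hns _ rfl
end
end

section
/- Let Λ be a ℤ-lattice in ℂ² and let σ be a ℂ-linear automorphism of ℂ² of finite order with σ(Λ) = Λ, which is non-symplectic (det_ℂ σ ≠ 1) and such that ⋀²(σ|_Λ) has prime order p. Let T = {x ∈ ⋀²Λ : ⋀²(σ|_Λ)(x) = x} be the invariant lattice. Then there exists a generator vol of ⋀⁴Λ such that T, equipped with the restriction of the wedge form determined by vol, is isometric to one of the following seven lattices: U, U(2), ⟨2⟩⊕⟨−2⟩, U⊕⟨−2⟩⊕⟨−2⟩ (occurring for p = 2), U, U(3), U⊕A₂(−1) (occurring for p = 3), or H₅ (occurring for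 p = 5). -/
set_option synthInstance.maxHeartbeats 1000000
set_option maxHeartbeats 1000000

open ExteriorAlgebra Module Matrix

noncomputable section

namespace WedgeLattice

section CommRing

variable {R M : Type*} [CommRing R] [AddCommGroup M] [Module R M]

lemma extPowMap_eq_map {N : Type*} [AddCommGroup N] [Module R N] (n : ℕ) (f : M →ₗ[R] N) :
    extPowMap n f = exteriorPower.map n f := by
  refine exteriorPower.linearMap_ext (AlternatingMap.ext fun v => Subtype.ext ?_)
  rw [LinearMap.compAlternatingMap_apply, LinearMap.compAlternatingMap_apply,
    exteriorPower.map_apply_ιMulti]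
  exact ExteriorAlgebra.map_apply_ιMulti f v

lemma extPowMap_one (n : ℕ) : extPowMap n (1 : End R M) = (1 : End R (⋀[R]^n M)) := by
  rw [extPowMap_eq_map]
  exact exteriorPower.map_id

lemma extPowMap_mul (n : ℕ) (f g : End R M) :
    extPowMap n (f * g) = (extPowMap n f * extPowMap n g : End R (⋀[R]^n M)) := by
  simp only [extPowMap_eq_map]
  exact exteriorPower.map_comp g f

lemma extPowMap_pow (n m : ℕ) (f : End R M) :
    extPowMap n (f ^ m) = (extPowMap n f ^ m : End R (⋀[R]^n M)) := by
  induction m with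
  | zero => simp [extPowMap_one]
  | succ m ih => rw [pow_succ, pow_succ, extPowMap_mul, ih]

lemma extPowMap_two_neg (f : End R M) : extPowMap 2 (-f) = extPowMap 2 f := by
  simp only [extPowMap_eq_map]
  refine exteriorPower.linearMap_ext (AlternatingMap.ext fun v => ?_)
  have h : (-f : End R M) ∘ v = fun i => (-1 : R) • (f ∘ v) i := by
    ext i; simp
  rw [LinearMap.compAlternatingMap_apply, LinearMap.compAlternatingMap_apply,
    exteriorPower.map_apply_ιMulti, exteriorPower.map_apply_ιMulti, h,
    AlternatingMap.map_smul_univ]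
  simp

/-- The first index of the `k`-th pair `i < j` in `Fin 4`. -/
def fstIdx : Fin 6 → Fin 4 := ![0, 0, 0, 1, 1, 2]

/-- The second index of the `k`-th pair `i < j` in `Fin 4`. -/
def sndIdx : Fin 6 → Fin 4 := ![1, 2, 3, 2, 3, 3]

/-- The bivector `e i ∧ e j` attached to the `k`-th pair `i < j`. -/
def bivector (e : Basis (Fin 4) R M) (k : Fin 6) : ⋀[R]^2 M :=
  exteriorPower.ιMulti R 2 ![e (fstIdx k), e (sndIdx k)]

/-- The Plücker coordinate of index `(a, b)`, as an alternating map. -/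
def pluckerAlt (e : Basis (Fin 4) R M) (a b : Fin 4) : M [⋀^Fin 2]→ₗ[R] R :=
  (Matrix.detRowAlternating (R := R) (n := Fin 2)).compLinearMap
    (LinearMap.pi ![e.coord a, e.coord b])

lemma pluckerAlt_apply (e : Basis (Fin 4) R M) (a b : Fin 4) (x y : M) :
    pluckerAlt e a b ![x, y] = e.repr x a * e.repr y b - e.repr x b * e.repr y a := by
  refine (Matrix.det_fin_two _).trans ?_
  simp

/-- The Plücker coordinates of an element of `⋀²M`. -/
def plucker (e : Basis (Fin 4) R M) : ⋀[R]^2 M →ₗ[R] (Fin 6 → R) :=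
  LinearMap.pi fun k => exteriorPower.alternatingMapLinearEquiv
    (pluckerAlt e (fstIdx k) (sndIdx k))

lemma plucker_ιMulti (e : Basis (Fin 4) R M) (x y : M) (k : Fin 6) :
    plucker e (exteriorPower.ιMulti R 2 ![x, y]) k =
      e.repr x (fstIdx k) * e.repr y (sndIdx k) - e.repr x (sndIdx k) * e.repr y (fstIdx k) := by
  rw [plucker, LinearMap.pi_apply, exteriorPower.alternatingMapLinearEquiv_apply_ιMulti,
    pluckerAlt_apply]

lemma plucker_bivector (e : Basis (Fin 4) R M) (k : Fin 6) :
    plucker e (bivector e k) = Pi.single k 1 := by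
  ext l
  rw [bivector, plucker_ιMulti]
  simp only [Basis.repr_self, Finsupp.single_apply]
  fin_cases k <;> fin_cases l <;> simp [fstIdx, sndIdx]

lemma ιMulti_two_swap (x y : M) :
    exteriorPower.ιMulti R 2 ![x, y] = -exteriorPower.ιMulti R 2 ![y, x] := by
  have h := (exteriorPower.ιMulti R 2 (M := M)).map_swap ![y, x] (i := 0) (j := 1) (by decide)
  rw [← h]
  congr 1
  ext i
  fin_cases i <;> rfl

lemma sum_plucker_smul (e : Basis (Fin 4) R M) (x : ⋀[R]^2 M) :
    ∑ k, plucker e x k • bivector e k = x := by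
  let F : ⋀[R]^2 M →ₗ[R] ⋀[R]^2 M :=
    ∑ k, ((LinearMap.proj k).comp (plucker e)).smulRight (bivector e k)
  have hF : F = LinearMap.id := by
    refine exteriorPower.linearMap_ext (Basis.ext_alternating e fun v hv => ?_)
    have hv' : (fun i => e (v i)) = ![e (v 0), e (v 1)] := by
      ext i; fin_cases i <;> rfl
    have h01 : v 0 ≠ v 1 := fun h => absurd (hv h) (by decide)
    rw [LinearMap.compAlternatingMap_apply, LinearMap.compAlternatingMap_apply, hv',
      LinearMap.id_apply]
    simp only [F,
      LinearMap.sum_apply, LinearMap.smulRight_apply, LinearMap.comp_apply, LinearMap.proj_apply,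
      plucker_ιMulti, Basis.repr_self, Finsupp.single_apply]
    generalize v 0 = a at *
    generalize v 1 = b at *
    have swap := ιMulti_two_swap (R := R) (e a) (e b)
    fin_cases a <;> fin_cases b <;>
      first
        | exact absurd rfl h01
        | (simp [Fin.sum_univ_six, bivector, fstIdx, sndIdx]; done)
        | (rw [swap]; simp [Fin.sum_univ_six, bivector, fstIdx, sndIdx])
  have := LinearMap.congr_fun hF x
  simpa [F] using this

/-- The generator of `⋀⁴M` attached to a basis. -/
def volume (e : Basis (Fin 4) R M) : ⋀[R]^4 M := exteriorPower.ιMulti R 4 e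

lemma ιMulti_four_eq (e : Basis (Fin 4) R M) (v : Fin 4 → M) :
    exteriorPower.ιMulti R 4 v = e.det v • volume e := by
  have h : exteriorPower.ιMulti R 4 (M := M) =
      (LinearMap.toSpanSingleton R _ (volume e)).compAlternatingMap e.det := by
    refine Basis.ext_alternating e fun i hi => ?_
    let s : Equiv.Perm (Fin 4) := Equiv.ofBijective i (Finite.injective_iff_bijective.1 hi)
    change exteriorPower.ιMulti R 4 (e ∘ s) =
      (LinearMap.toSpanSingleton R _ (volume e)).compAlternatingMap e.det (e ∘ s)
    rw [AlternatingMap.map_perm, AlternatingMap.map_perm, LinearMap.compAlternatingMap_apply,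
      Basis.det_self, LinearMap.toSpanSingleton_apply, one_smul]
    rfl
  conv_lhs => rw [h]
  rfl

lemma span_volume (e : Basis (Fin 4) R M) : Submodule.span R {volume e} = ⊤ := by
  rw [eq_top_iff, ← exteriorPower.ιMulti_span, Submodule.span_le]
  rintro _ ⟨v, rfl⟩
  rw [ιMulti_four_eq e]
  exact Submodule.smul_mem _ _ (Submodule.mem_span_singleton_self _)

/-- The Gram matrix of the wedge form in the basis of bivectors. -/
def wedgeGram : Matrix (Fin 6) (Fin 6) ℤ :=
  !![0, 0, 0, 0, 0, 1; 0, 0, 0, 0, -1, 0; 0, 0, 0, 1, 0, 0;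
     0, 0, 1, 0, 0, 0; 0, -1, 0, 0, 0, 0; 1, 0, 0, 0, 0, 0]

lemma det_pairs (k l : Fin 6) :
    (Matrix.of fun i j : Fin 4 => if ![fstIdx k, sndIdx k, fstIdx l, sndIdx l] j = i then
      (1 : ℤ) else 0).det = wedgeGram k l := by
  fin_cases k <;> fin_cases l <;> decide +kernel

lemma bivector_mul_bivector (e : Basis (Fin 4) R M) (k l : Fin 6) :
    (bivector e k : ExteriorAlgebra R M) * (bivector e l : ExteriorAlgebra R M) =
      (wedgeGram k l : R) • (volume e : ExteriorAlgebra R M) := by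
  let v : Fin 4 → Fin 4 := ![fstIdx k, sndIdx k, fstIdx l, sndIdx l]
  have h : (bivector e k : ExteriorAlgebra R M) * (bivector e l : ExteriorAlgebra R M) =
      (exteriorPower.ιMulti R 4 (e ∘ v) : ⋀[R]^4 M) := by
    simp [bivector, ExteriorAlgebra.ιMulti_apply, v, mul_assoc]
    rfl
  have hd : e.det (e ∘ v) = (wedgeGram k l : R) := by
    have : e.toMatrix (e ∘ v) = (Int.castRingHom R).mapMatrix
        (Matrix.of fun i j => if v j = i then (1 : ℤ) else 0) := by
      ext i j
      simp [Basis.toMatrix_apply, Finsupp.single_apply]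
    rw [Basis.det_apply, this, ← RingHom.map_det, det_pairs]
    simp
  rw [h, ιMulti_four_eq e, hd]
  rfl

lemma coe_mul_coe (e : Basis (Fin 4) R M) (x y : ⋀[R]^2 M) :
    (x : ExteriorAlgebra R M) * (y : ExteriorAlgebra R M) =
      (∑ k, ∑ l, plucker e x k * wedgeGram k l * plucker e y l) •
        (volume e : ExteriorAlgebra R M) := by
  have hx := congrArg (⋀[R]^2 M).subtype (sum_plucker_smul e x)
  have hy := congrArg (⋀[R]^2 M).subtype (sum_plucker_smul e y)
  simp only [map_sum, map_smul, Submodule.subtype_apply] at hx hy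
  rw [← hx, ← hy, Finset.sum_mul_sum]
  simp only [smul_mul_smul_comm, bivector_mul_bivector, smul_smul, ← Finset.sum_smul]
  congr 1
  exact Finset.sum_congr rfl fun i _ => Finset.sum_congr rfl fun j _ => by ring

/-- The second compound of a `4 × 4` matrix. -/
def compound (A : Matrix (Fin 4) (Fin 4) R) : Matrix (Fin 6) (Fin 6) R :=
  Matrix.of fun k l => A (fstIdx k) (fstIdx l) * A (sndIdx k) (sndIdx l) -
    A (sndIdx k) (fstIdx l) * A (fstIdx k) (sndIdx l)

lemma plucker_extPowMap (e : Basis (Fin 4) R M) (f : End R M) (x : ⋀[R]^2 M) :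
    plucker e (extPowMap 2 f x) = compound (LinearMap.toMatrix e e f) *ᵥ plucker e x := by
  conv_lhs => rw [← sum_plucker_smul e x]
  ext k
  simp only [map_sum, map_smul, Finset.sum_apply, Pi.smul_apply, Matrix.mulVec, dotProduct]
  refine Finset.sum_congr rfl fun l _ => ?_
  have h : extPowMap 2 f (bivector e l) =
      exteriorPower.ιMulti R 2 ![f (e (fstIdx l)), f (e (sndIdx l))] := by
    rw [extPowMap_eq_map, bivector, exteriorPower.map_apply_ιMulti]
    congr 1
    ext i
    fin_cases i <;> rfl
  rw [h, plucker_ιMulti, compound, Matrix.of_apply]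
  simp only [LinearMap.toMatrix_apply, smul_eq_mul]
  ring

lemma plucker_injective (e : Basis (Fin 4) R M) : Function.Injective (plucker e) := by
  intro x y h
  rw [← sum_plucker_smul e x, ← sum_plucker_smul e y, h]

lemma plucker_surjective (e : Basis (Fin 4) R M) : Function.Surjective (plucker e) := by
  intro y
  refine ⟨∑ k, y k • bivector e k, ?_⟩
  ext l
  simp [plucker_bivector, Finset.sum_apply, Pi.single_apply]

/-- The wedge form on `⋀²M` determined by `volume e`. -/
def wedgeForm (e : Basis (Fin 4) R M) : ⋀[R]^2 M →ₗ[R] ⋀[R]^2 M →ₗ[R] R :=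
  (Matrix.toBilin' (wedgeGram.map (Int.castRingHom R))).compl₁₂ (plucker e) (plucker e)

lemma wedgeForm_apply (e : Basis (Fin 4) R M) (x y : ⋀[R]^2 M) :
    wedgeForm e x y = ∑ k, ∑ l, plucker e x k * wedgeGram k l * plucker e y l := by
  simp [wedgeForm, Matrix.toBilin'_apply]

lemma compound_eq_one (e : Basis (Fin 4) R M) (f : End R M)
    (hf : extPowMap 2 f = (1 : End R (⋀[R]^2 M))) :
    compound (LinearMap.toMatrix e e f) = 1 := by
  apply Matrix.toLin'.injective
  refine LinearMap.ext fun y => ?_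
  obtain ⟨x, rfl⟩ := plucker_surjective e y
  rw [Matrix.toLin'_apply, ← plucker_extPowMap, hf]
  simp

lemma eq_smul_one_of_compound_eq_one {A : Matrix (Fin 4) (Fin 4) R} (hC : compound A = 1) :
    A 0 0 * A 0 0 = 1 ∧ A = A 0 0 • (1 : Matrix (Fin 4) (Fin 4) R) := by
  have h (k l : Fin 6) : A (fstIdx k) (fstIdx l) * A (sndIdx k) (sndIdx l) -
      A (sndIdx k) (fstIdx l) * A (fstIdx k) (sndIdx l) = if k = l then 1 else 0 := by
    rw [← Matrix.one_apply, ← hC]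
    rfl
  have hidx : ∀ a b : Fin 4, a ≠ b → ∃ k, fstIdx k = a ∧ sndIdx k = b ∨
      fstIdx k = b ∧ sndIdx k = a := by decide
  have hone (a b : Fin 4) (hab : a ≠ b) : A a a * A b b - A b a * A a b = 1 := by
    obtain ⟨k, ⟨rfl, rfl⟩ | ⟨rfl, rfl⟩⟩ := hidx a b hab
    · simpa using h k k
    · have := h k k
      rw [if_pos rfl] at this
      linear_combination this
  have hoff (i l : Fin 4) (hil : i ≠ l) : A l i = 0 := by
    obtain ⟨j, hj, hjl⟩ : ∃ j, j ≠ i ∧ j ≠ l := by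
      revert i l; decide
    have hzero (a b c d : Fin 4) (hab : a ≠ b) (hcd : c ≠ d) (hac : a ≠ c) (had : a ≠ d) :
        A a c * A b d - A b c * A a d = 0 := by
      obtain ⟨k, hk⟩ := hidx a b hab
      obtain ⟨m, hm⟩ := hidx c d hcd
      have hkm : k ≠ m := by grind
      have := h k m
      rw [if_neg hkm] at this
      obtain ⟨rfl, rfl⟩ | ⟨rfl, rfl⟩ := hk <;> obtain ⟨rfl, rfl⟩ | ⟨rfl, rfl⟩ := hm <;>
        grind
    linear_combination (-A l i) * hone i j hj.symm +
      A i i * hzero l j i j hjl.symm hj.symm hil.symm hjl.symm -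
      A j i * hzero l i i j hil.symm hj.symm hil.symm hjl.symm
  have hdiag (i j : Fin 4) (hij : i ≠ j) : A i i * A j j = 1 := by
    have := hone i j hij
    rwa [hoff i j hij, zero_mul, sub_zero] at this
  have heq (i j : Fin 4) : A j j = A i i := by
    obtain rfl | hij := eq_or_ne i j
    · rfl
    obtain ⟨k, hki, hkj⟩ : ∃ k, k ≠ i ∧ k ≠ j := by
      revert i j; decide
    linear_combination A i i * hdiag k j hkj - A j j * hdiag k i hki
  refine ⟨by simpa [heq 0 1] using hdiag 0 1 (by decide), Matrix.ext fun i j => ?_⟩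
  obtain rfl | hij := eq_or_ne i j
  · simp [heq 0 i]
  · simp [hij, hoff j i hij.symm]

end CommRing

lemma eq_one_or_neg_one_of_extPowMap_two {M : Type*} [AddCommGroup M] [Module ℤ M]
    (e : Basis (Fin 4) ℤ M) (f : End ℤ M)
    (hf : extPowMap 2 f = (1 : End ℤ (⋀[ℤ]^2 M))) : f = 1 ∨ f = -1 := by
  obtain ⟨h1, hA⟩ := eq_smul_one_of_compound_eq_one (compound_eq_one e f hf)
  refine (mul_self_eq_one_iff.1 h1).imp (fun h0 => ?_) (fun h0 => ?_) <;>
  · apply (LinearMap.toMatrix e e).injective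
    rw [hA, h0]
    simp [LinearMap.toMatrix_one]

section Coordinates

/-- To compute the Gram matrix of a submodule, it suffices to work in coordinates. -/
lemma hasGramMatrix_of_coords {N : Type*} [AddCommGroup N] [Module ℤ N]
    (b : N →ₗ[ℤ] N →ₗ[ℤ] ℤ) (T : Submodule ℤ N) {m n : ℕ} (φ : N →ₗ[ℤ] (Fin m → ℤ))
    (hφ : Function.Injective φ) (hφ' : Function.Surjective φ)
    {B C : Matrix (Fin m) (Fin m) ℤ}
    (hB : ∀ x y, b x y = ∑ k, ∑ l, φ x k * B k l * φ y l)
    (hT : ∀ x, x ∈ T ↔ C *ᵥ φ x = φ x)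
    {G : Matrix (Fin n) (Fin n) ℤ} (V K : Matrix (Fin n) (Fin m) ℤ)
    (hV : C * Vᵀ = Vᵀ)
    (hK : ∀ y, C *ᵥ y = y → y = (K *ᵥ y) ᵥ* V)
    (hKV : K * Vᵀ = 1) (hG : V * B * Vᵀ = G) :
    HasGramMatrix b T G := by
  choose w hw using fun i => hφ' (V i)
  have hwm (i : Fin n) : w i ∈ T := by
    rw [hT, hw]
    ext k
    exact congrFun (congrFun hV k) i
  let v : Fin n → T := fun i => ⟨w i, hwm i⟩
  have hv (c : Fin n → ℤ) : φ (∑ i, c i • v i : T) = c ᵥ* V := by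
    ext k
    simp [v, hw, Matrix.vecMul, dotProduct]
  have hli : LinearIndependent ℤ v := by
    rw [Fintype.linearIndependent_iff]
    intro c hc
    have h1 : c ᵥ* V = 0 := by
      rw [← hv, hc]
      simp
    have h3 : V * Kᵀ = 1 := by
      rw [← Matrix.transpose_inj, Matrix.transpose_mul, Matrix.transpose_transpose, hKV,
        Matrix.transpose_one]
    have h2 : c = 0 := by
      rw [← Matrix.vecMul_one c, ← h3, ← Matrix.vecMul_vecMul, h1, Matrix.zero_vecMul]
    exact fun i => congrFun h2 i
  have hsp : ⊤ ≤ Submodule.span ℤ (Set.range v) := by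
    rintro ⟨x, hx⟩ -
    have h2 : (⟨x, hx⟩ : T) = ∑ i, (K *ᵥ φ x) i • v i :=
      Subtype.ext (hφ ((hK _ ((hT x).1 hx)).trans (hv _).symm))
    rw [h2]
    exact Submodule.sum_mem _ fun i _ =>
      Submodule.smul_mem _ _ (Submodule.subset_span ⟨i, rfl⟩)
  refine ⟨Basis.mk hli hsp, fun i j => ?_⟩
  rw [Basis.mk_apply, Basis.mk_apply, hB, hw, hw, ← hG, Finset.sum_comm]
  simp [Matrix.mul_apply, Finset.sum_mul]

end Coordinates

section NormalForms

variable {M : Type*} [AddCommGroup M] [Module ℤ M]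

/-- The invariant lattice of `⋀²h` has Gram matrix `G` for one of the two wedge forms. -/
def HasInvariantGram (h : End ℤ M) {n : ℕ} (G : Matrix (Fin n) (Fin n) ℤ) : Prop :=
  ∃ e : Basis (Fin 4) ℤ M, HasGramMatrix (wedgeForm e)
    (LinearMap.ker (extPowMap 2 h - LinearMap.id)) G

/-- The endomorphism `h` has matrix `A` in some basis. -/
def Represents (h : End ℤ M) (A : Matrix (Fin 4) (Fin 4) ℤ) : Prop :=
  ∃ e : Basis (Fin 4) ℤ M, LinearMap.toMatrix e e h = A

lemma Represents.conj {h : End ℤ M} {A A' : Matrix (Fin 4) (Fin 4) ℤ} (hA : Represents h A)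
    (S T : Matrix (Fin 4) (Fin 4) ℤ) (hST : S * T = 1) (hS : A * S = S * A') :
    Represents h A' := by
  obtain ⟨e, rfl⟩ := hA
  have hTS : T * S = 1 := mul_eq_one_comm.1 hST
  let L : M ≃ₗ[ℤ] M := Matrix.toLinOfInv e e hST hTS
  have h1 : e.toMatrix (e.map L) = S := by
    ext i j
    simp [Basis.toMatrix_apply, L, Matrix.toLinOfInv, Matrix.toLin_self, Finsupp.single_apply]
  have h2 : (e.map L).toMatrix e = T := by
    rw [← one_mul ((e.map L).toMatrix e), ← hTS, mul_assoc]
    conv_lhs => rw [← h1, Basis.toMatrix_mul_toMatrix_flip, mul_one]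
  refine ⟨e.map L, ?_⟩
  rw [← basis_toMatrix_mul_linearMap_toMatrix_mul_basis_toMatrix (e.map L) e (e.map L) e, h1, h2,
    mul_assoc, hS, ← mul_assoc, hTS, one_mul]

lemma Represents.hasInvariantGram {h : End ℤ M} {A : Matrix (Fin 4) (Fin 4) ℤ}
    (hA : Represents h A) {n : ℕ} {G : Matrix (Fin n) (Fin n) ℤ}
    {C : Matrix (Fin 6) (Fin 6) ℤ} (hC : compound A = C) (V K : Matrix (Fin n) (Fin 6) ℤ)
    (hV : C * Vᵀ = Vᵀ) (hK : ∀ y, C *ᵥ y = y → y = (K *ᵥ y) ᵥ* V)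
    (hKV : K * Vᵀ = 1) (hG : V * wedgeGram * Vᵀ = G) : HasInvariantGram h G := by
  obtain ⟨e, he⟩ := hA
  refine ⟨e, hasGramMatrix_of_coords _ _ (plucker e) (plucker_injective e) (plucker_surjective e)
    (fun x y => ?_) (fun x => ?_) V K hV hK hKV hG⟩
  · rw [wedgeForm_apply]
    simp
  · rw [LinearMap.mem_ker, LinearMap.sub_apply, LinearMap.id_apply, sub_eq_zero, ← hC, ← he,
      ← plucker_extPowMap, (plucker_injective e).eq_iff]

lemma hasInvariantGram_of_sq_eq_neg_one {h : End ℤ M}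
    (hA : Represents h !![0, -1, 0, 0; 1, 0, 0, 0; 0, 0, 0, -1; 0, 0, 1, 0]) :
    HasInvariantGram h !![0, 1, 0, 0; 1, 0, 0, 0; 0, 0, -2, 0; 0, 0, 0, -2] := by
  refine hA.hasInvariantGram (C := !![1, 0, 0, 0, 0, 0; 0, 0, 0, 0, 1, 0; 0, 0, 0, -1, 0, 0;
      0, 0, -1, 0, 0, 0; 0, 1, 0, 0, 0, 0; 0, 0, 0, 0, 0, 1]) (by decide +kernel)
    !![1, 0, 0, 0, 0, 0; 0, 0, 0, 0, 0, 1; 0, 1, 0, 0, 1, 0; 0, 0, 1, -1, 0, 0]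
    !![1, 0, 0, 0, 0, 0; 0, 0, 0, 0, 0, 1; 0, 1, 0, 0, 0, 0; 0, 0, 1, 0, 0, 0]
    (by decide +kernel) (fun y hy => ?_) (by decide +kernel) (by decide +kernel)
  have h := congrFun hy
  simp [Fin.forall_fin_succ, Matrix.mulVec, dotProduct, Fin.sum_univ_succ] at h
  ext i
  fin_cases i <;> simp [Matrix.mulVec, Matrix.vecMul, dotProduct, Fin.sum_univ_succ] <;> omega

lemma hasInvariantGram_of_involution_zero {h : End ℤ M}
    (hA : Represents h !![-1, 0, 0, 0; 0, -1, 0, 0; 0, 0, 1, 0; 0, 0, 0, 1]) :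
    HasInvariantGram h !![0, 1; 1, 0] := by
  refine hA.hasInvariantGram (C := !![1, 0, 0, 0, 0, 0; 0, -1, 0, 0, 0, 0; 0, 0, -1, 0, 0, 0;
      0, 0, 0, -1, 0, 0; 0, 0, 0, 0, -1, 0; 0, 0, 0, 0, 0, 1]) (by decide +kernel)
    !![1, 0, 0, 0, 0, 0; 0, 0, 0, 0, 0, 1]
    !![1, 0, 0, 0, 0, 0; 0, 0, 0, 0, 0, 1]
    (by decide +kernel) (fun y hy => ?_) (by decide +kernel) (by decide +kernel)
  have h := congrFun hy
  simp [Fin.forall_fin_succ, Matrix.mulVec, dotProduct, Fin.sum_univ_succ] at h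
  ext i
  fin_cases i <;> simp [Matrix.mulVec, Matrix.vecMul, dotProduct, Fin.sum_univ_succ] <;> omega

lemma hasInvariantGram_of_involution_one {h : End ℤ M}
    (hA : Represents h !![-1, 0, 1, 0; 0, -1, 0, 0; 0, 0, 1, 0; 0, 0, 0, 1]) :
    HasInvariantGram h !![0, 2; 2, 0] := by
  refine hA.hasInvariantGram (C := !![1, 0, 0, 1, 0, 0; 0, -1, 0, 0, 0, 0; 0, 0, -1, 0, 0, 1;
      0, 0, 0, -1, 0, 0; 0, 0, 0, 0, -1, 0; 0, 0, 0, 0, 0, 1]) (by decide +kernel)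
    !![1, 0, 0, 0, 0, 0; 0, 0, 1, 0, 0, 2]
    !![1, 0, 0, 0, 0, 0; 0, 0, 1, 0, 0, 0]
    (by decide +kernel) (fun y hy => ?_) (by decide +kernel) (by decide +kernel)
  have h := congrFun hy
  simp [Fin.forall_fin_succ, Matrix.mulVec, dotProduct, Fin.sum_univ_succ] at h
  ext i
  fin_cases i <;> simp [Matrix.mulVec, Matrix.vecMul, dotProduct, Fin.sum_univ_succ] <;> omega

lemma hasInvariantGram_of_involution_two {h : End ℤ M}
    (hA : Represents h !![-1, 0, 1, 0; 0, -1, 0, 1; 0, 0, 1, 0; 0, 0, 0, 1]) :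
    HasInvariantGram h !![2, 0; 0, -2] := by
  refine hA.hasInvariantGram (C := !![1, 0, -1, 1, 0, 1; 0, -1, 0, 0, 0, 0; 0, 0, -1, 0, 0, 1;
      0, 0, 0, -1, 0, -1; 0, 0, 0, 0, -1, 0; 0, 0, 0, 0, 0, 1]) (by decide +kernel)
    !![1, 0, 1, -1, 0, 2; 0, 0, 1, -1, 0, 2]
    !![1, 0, 0, 0, 0, 0; -1, 0, 1, 0, 0, 0]
    (by decide +kernel) (fun y hy => ?_) (by decide +kernel) (by decide +kernel)
  have h := congrFun hy
  simp [Fin.forall_fin_succ, Matrix.mulVec, dotProduct, Fin.sum_univ_succ] at h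
  ext i
  fin_cases i <;> simp [Matrix.mulVec, Matrix.vecMul, dotProduct, Fin.sum_univ_succ] <;> omega

lemma hasInvariantGram_of_eisenstein {h : End ℤ M}
    (hA : Represents h !![0, -1, 0, 0; 1, -1, 0, 0; 0, 0, 0, -1; 0, 0, 1, -1]) :
    HasInvariantGram h !![0, 1, 0, 0; 1, 0, 0, 0; 0, 0, -2, -1; 0, 0, -1, -2] := by
  refine hA.hasInvariantGram (C := !![1, 0, 0, 0, 0, 0; 0, 0, 0, 0, 1, 0; 0, 0, 0, -1, 1, 0;
      0, 0, -1, 0, 1, 0; 0, 1, -1, -1, 1, 0; 0, 0, 0, 0, 0, 1]) (by decide +kernel)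
    !![1, 0, 0, 0, 0, 0; 0, 0, 0, 0, 0, 1; 0, 0, 1, -1, 0, 0; 0, 1, 1, 0, 1, 0]
    !![1, 0, 0, 0, 0, 0; 0, 0, 0, 0, 0, 1; 0, -1, 1, 0, 0, 0; 0, 1, 0, 0, 0, 0]
    (by decide +kernel) (fun y hy => ?_) (by decide +kernel) (by decide +kernel)
  have h := congrFun hy
  simp [Fin.forall_fin_succ, Matrix.mulVec, dotProduct, Fin.sum_univ_succ] at h
  ext i
  fin_cases i <;> simp [Matrix.mulVec, Matrix.vecMul, dotProduct, Fin.sum_univ_succ] <;> omega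

lemma hasInvariantGram_of_cube_zero {h : End ℤ M}
    (hA : Represents h !![0, -1, 0, 0; 1, -1, 0, 0; 0, 0, 1, 0; 0, 0, 0, 1]) :
    HasInvariantGram h !![0, 1; 1, 0] := by
  refine hA.hasInvariantGram (C := !![1, 0, 0, 0, 0, 0; 0, 0, 0, -1, 0, 0; 0, 0, 0, 0, -1, 0;
      0, 1, 0, -1, 0, 0; 0, 0, 1, 0, -1, 0; 0, 0, 0, 0, 0, 1]) (by decide +kernel)
    !![1, 0, 0, 0, 0, 0; 0, 0, 0, 0, 0, 1]
    !![1, 0, 0, 0, 0, 0; 0, 0, 0, 0, 0, 1]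
    (by decide +kernel) (fun y hy => ?_) (by decide +kernel) (by decide +kernel)
  have h := congrFun hy
  simp [Fin.forall_fin_succ, Matrix.mulVec, dotProduct, Fin.sum_univ_succ] at h
  ext i
  fin_cases i <;> simp [Matrix.mulVec, Matrix.vecMul, dotProduct, Fin.sum_univ_succ] <;> omega

lemma hasInvariantGram_of_cube_one {h : End ℤ M}
    (hA : Represents h !![0, -1, 1, 0; 1, -1, 0, 0; 0, 0, 1, 0; 0, 0, 0, 1]) :
    HasInvariantGram h !![0, 3; 3, 0] := by
  refine hA.hasInvariantGram (C := !![1, -1, 0, 1, 0, 0; 0, 0, 0, -1, 0, 0; 0, 0, 0, 0, -1, 1;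
      0, 1, 0, -1, 0, 0; 0, 0, 1, 0, -1, 0; 0, 0, 0, 0, 0, 1]) (by decide +kernel)
    !![1, 0, 0, 0, 0, 0; 0, 0, 2, 0, 1, 3]
    !![1, 0, 0, 0, 0, 0; 0, 0, 0, 0, 1, 0]
    (by decide +kernel) (fun y hy => ?_) (by decide +kernel) (by decide +kernel)
  have h := congrFun hy
  simp [Fin.forall_fin_succ, Matrix.mulVec, dotProduct, Fin.sum_univ_succ] at h
  ext i
  fin_cases i <;> simp [Matrix.mulVec, Matrix.vecMul, dotProduct, Fin.sum_univ_succ] <;> omega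

lemma hasInvariantGram_of_quintic {h : End ℤ M}
    (hA : Represents h !![0, 0, 0, -1; 1, 0, 0, -1; 0, 1, 0, -1; 0, 0, 1, -1]) :
    HasInvariantGram h !![2, 1; 1, -2] := by
  refine hA.hasInvariantGram (C := !![0, 0, 1, 0, 0, 0; 0, 0, 0, 0, 1, 0; 0, 0, 0, 0, 0, 1;
      1, 0, -1, 0, 1, 0; 0, 1, -1, 0, 0, 1; 0, 0, 0, 1, -1, 1]) (by decide +kernel)
    !![1, 0, 1, 0, 0, 1; 0, 1, 0, 1, 1, 0]
    !![1, 0, 0, 0, 0, 0; 0, 1, 0, 0, 0, 0]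
    (by decide +kernel) (fun y hy => ?_) (by decide +kernel) (by decide +kernel)
  have h := congrFun hy
  simp [Fin.forall_fin_succ, Matrix.mulVec, dotProduct, Fin.sum_univ_succ] at h
  ext i
  fin_cases i <;> simp [Matrix.mulVec, Matrix.vecMul, dotProduct, Fin.sum_univ_succ] <;> omega

end NormalForms

section UpperTriangular

variable {M : Type*} [AddCommGroup M] [Module ℤ M] {h : End ℤ M}

/-- An involution with two-dimensional negative eigenlattice. -/
def involutionMatrix (a b c d : ℤ) : Matrix (Fin 4) (Fin 4) ℤ :=
  !![-1, 0, a, b; 0, -1, c, d; 0, 0, 1, 0; 0, 0, 0, 1]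

/-- An automorphism of order three with two-dimensional fixed quotient. -/
def cubeMatrix (a b c d : ℤ) : Matrix (Fin 4) (Fin 4) ℤ :=
  !![0, -1, a, b; 1, -1, c, d; 0, 0, 1, 0; 0, 0, 0, 1]

lemma involutionMatrix_emod {a b c d : ℤ} (hA : Represents h (involutionMatrix a b c d)) :
    Represents h (involutionMatrix (a % 2) (b % 2) (c % 2) (d % 2)) := by
  refine hA.conj !![1, 0, a / 2, b / 2; 0, 1, c / 2, d / 2; 0, 0, 1, 0; 0, 0, 0, 1]
    !![1, 0, -(a / 2), -(b / 2); 0, 1, -(c / 2), -(d / 2); 0, 0, 1, 0; 0, 0, 0, 1] ?_ ?_ <;>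
  · ext i j
    fin_cases i <;> fin_cases j <;>
      simp [Matrix.mul_apply, Fin.sum_univ_succ, involutionMatrix] <;> omega

lemma involutionMatrix_swap {a b c d : ℤ} (hA : Represents h (involutionMatrix a b c d)) :
    Represents h (involutionMatrix b a d c) := by
  refine hA.conj !![1, 0, 0, 0; 0, 1, 0, 0; 0, 0, 0, 1; 0, 0, 1, 0]
    !![1, 0, 0, 0; 0, 1, 0, 0; 0, 0, 0, 1; 0, 0, 1, 0] ?_ ?_ <;>
  · ext i j
    fin_cases i <;> fin_cases j <;>
      simp [Matrix.mul_apply, Fin.sum_univ_succ, involutionMatrix]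

lemma hasInvariantGram_of_involutionMatrix_rank_one {a c : ℤ} (hac : IsCoprime a c)
    (hA : Represents h (involutionMatrix a 0 c 0)) :
    HasInvariantGram h !![0, 2; 2, 0] := by
  obtain ⟨s, t, hst⟩ := hac
  refine hasInvariantGram_of_involution_one
    (hA.conj !![a, -t, 0, 0; c, s, 0, 0; 0, 0, 1, 0; 0, 0, 0, 1]
    !![s, t, 0, 0; -c, a, 0, 0; 0, 0, 1, 0; 0, 0, 0, 1] ?_ ?_) <;>
  · ext i j
    fin_cases i <;> fin_cases j <;>
      simp [Matrix.mul_apply, Fin.sum_univ_succ, involutionMatrix] <;>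
      first | ring1 | linear_combination hst

lemma hasInvariantGram_of_involutionMatrix_rank_two {a b c d : ℤ}
    (hdet : (a * d - b * c) * (a * d - b * c) = 1)
    (hA : Represents h (involutionMatrix a b c d)) :
    HasInvariantGram h !![2, 0; 0, -2] := by
  set D := a * d - b * c
  refine hasInvariantGram_of_involution_two
    (hA.conj !![a, b, 0, 0; c, d, 0, 0; 0, 0, 1, 0; 0, 0, 0, 1]
    !![D * d, -D * b, 0, 0; -D * c, D * a, 0, 0; 0, 0, 1, 0; 0, 0, 0, 1] ?_ ?_) <;>
  · ext i j
    fin_cases i <;> fin_cases j <;>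
      simp [Matrix.mul_apply, Fin.sum_univ_succ, involutionMatrix] <;>
      first | ring1 | linear_combination hdet

lemma hasInvariantGram_of_involutionMatrix {a b c d : ℤ}
    (hA : Represents h (involutionMatrix a b c d)) :
    HasInvariantGram h !![0, 1; 1, 0] ∨ HasInvariantGram h !![0, 2; 2, 0] ∨
      HasInvariantGram h !![2, 0; 0, -2] := by
  have key {a b c d : ℤ} (hA : Represents h (involutionMatrix a b c d)) :
      Represents h (involutionMatrix a (b - a) c (d - c)) := by
    refine hA.conj !![1, 0, 0, 0; 0, 1, 0, 0; 0, 0, 1, -1; 0, 0, 0, 1]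
      !![1, 0, 0, 0; 0, 1, 0, 0; 0, 0, 1, 1; 0, 0, 0, 1] ?_ ?_ <;>
    · ext i j
      fin_cases i <;> fin_cases j <;>
        simp [Matrix.mul_apply, Fin.sum_univ_succ, involutionMatrix] <;> ring
  have hA' := involutionMatrix_emod hA
  have rank_one {a b c d : ℤ} (hA : Represents h (involutionMatrix a b c d)) (hb : b = 0)
      (hd : d = 0) (hac : a = 1 ∨ c = 1) : HasInvariantGram h !![0, 2; 2, 0] := by
    subst hb hd
    refine hasInvariantGram_of_involutionMatrix_rank_one ?_ hA
    obtain rfl | rfl := hac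
    · exact isCoprime_one_left
    · exact isCoprime_one_right
  generalize ha : a % 2 = a' at hA'
  generalize hb : b % 2 = b' at hA'
  generalize hc : c % 2 = c' at hA'
  generalize hd : d % 2 = d' at hA'
  by_cases h1 : b' = 0 ∧ d' = 0
  · by_cases h2 : a' = 0 ∧ c' = 0
    · rw [h1.1, h1.2, h2.1, h2.2] at hA'
      exact .inl (hasInvariantGram_of_involution_zero hA')
    · exact .inr (.inl (rank_one hA' h1.1 h1.2 (by omega)))
  by_cases h2 : a' = 0 ∧ c' = 0
  · exact .inr (.inl (rank_one (involutionMatrix_swap hA') h2.1 h2.2 (by omega)))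
  by_cases h3 : a' = b' ∧ c' = d'
  · exact .inr (.inl (rank_one (key hA') (by omega) (by omega) (by omega)))
  · refine .inr (.inr (hasInvariantGram_of_involutionMatrix_rank_two ?_ hA'))
    obtain rfl | rfl : a' = 0 ∨ a' = 1 := by omega
    · obtain ⟨rfl, rfl⟩ : b' = 1 ∧ c' = 1 := by omega
      norm_num
    · obtain rfl | rfl : c' = 0 ∨ c' = 1 := by omega
      · obtain rfl : d' = 1 := by omega
        norm_num
      · obtain ⟨rfl, rfl⟩ | ⟨rfl, rfl⟩ : (b' = 0 ∧ d' = 1) ∨ (b' = 1 ∧ d' = 0) := by omega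
        all_goals norm_num

lemma cubeMatrix_emod {a b c d : ℤ} (hA : Represents h (cubeMatrix a b c d)) :
    Represents h (cubeMatrix ((a + c) % 3) ((b + d) % 3) 0 0) := by
  obtain ⟨s, hs⟩ : ∃ s, s = (a + c) / 3 := ⟨_, rfl⟩
  obtain ⟨t, ht⟩ : ∃ t, t = (b + d) / 3 := ⟨_, rfl⟩
  have hs' : (a + c) % 3 = a + c - 3 * s := by omega
  have ht' : (b + d) % 3 = b + d - 3 * t := by omega
  rw [hs', ht']
  refine hA.conj !![1, 0, 2 * s - c, 2 * t - d; 0, 1, s, t; 0, 0, 1, 0; 0, 0, 0, 1]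
    !![1, 0, c - 2 * s, d - 2 * t; 0, 1, -s, -t; 0, 0, 1, 0; 0, 0, 0, 1] ?_ ?_ <;>
  · ext i j
    fin_cases i <;> fin_cases j <;>
      simp [Matrix.mul_apply, Fin.sum_univ_succ, cubeMatrix] <;> ring

lemma hasInvariantGram_of_cubeMatrix_rank_one {a b : ℤ} (ha : a = 1 ∨ a = 2)
    (hA : Represents h (cubeMatrix a b 0 0)) : HasInvariantGram h !![0, 3; 3, 0] := by
  have key (b : ℤ) (hA : Represents h (cubeMatrix 1 b 0 0)) :
      HasInvariantGram h !![0, 3; 3, 0] := by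
    refine hasInvariantGram_of_cube_one
      (hA.conj !![1, 0, 0, 0; 0, 1, 0, 0; 0, 0, 1, -b; 0, 0, 0, 1]
      !![1, 0, 0, 0; 0, 1, 0, 0; 0, 0, 1, b; 0, 0, 0, 1] ?_ ?_) <;>
    · ext i j
      fin_cases i <;> fin_cases j <;>
        simp [Matrix.mul_apply, Fin.sum_univ_succ, cubeMatrix]
  obtain rfl | rfl := ha
  · exact key b hA
  · have hneg : Represents h (cubeMatrix (-2) b 0 0) := by
      refine hA.conj !![1, 0, 0, 0; 0, 1, 0, 0; 0, 0, -1, 0; 0, 0, 0, 1]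
        !![1, 0, 0, 0; 0, 1, 0, 0; 0, 0, -1, 0; 0, 0, 0, 1] ?_ ?_ <;>
      · ext i j
        fin_cases i <;> fin_cases j <;>
          simp [Matrix.mul_apply, Fin.sum_univ_succ, cubeMatrix]
    exact key _ (cubeMatrix_emod hneg)

lemma hasInvariantGram_of_cubeMatrix {a b c d : ℤ} (hA : Represents h (cubeMatrix a b c d)) :
    HasInvariantGram h !![0, 1; 1, 0] ∨ HasInvariantGram h !![0, 3; 3, 0] := by
  have hswap {a b : ℤ} (hA : Represents h (cubeMatrix a b 0 0)) :
      Represents h (cubeMatrix b a 0 0) := by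
    refine hA.conj !![1, 0, 0, 0; 0, 1, 0, 0; 0, 0, 0, 1; 0, 0, 1, 0]
      !![1, 0, 0, 0; 0, 1, 0, 0; 0, 0, 0, 1; 0, 0, 1, 0] ?_ ?_ <;>
    · ext i j
      fin_cases i <;> fin_cases j <;>
        simp [Matrix.mul_apply, Fin.sum_univ_succ, cubeMatrix]
  have hA' := cubeMatrix_emod hA
  by_cases ha : (a + c) % 3 = 0
  · by_cases hb : (b + d) % 3 = 0
    · rw [ha, hb] at hA'
      exact .inl (hasInvariantGram_of_cube_zero hA')
    · exact .inr (hasInvariantGram_of_cubeMatrix_rank_one (by omega) (hswap hA'))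
  · exact .inr (hasInvariantGram_of_cubeMatrix_rank_one (by omega) hA')

end UpperTriangular

section Cyclotomic

open Polynomial NumberField

lemma isPrincipalIdealRing_cyclotomicField_four :
    IsPrincipalIdealRing (𝓞 (CyclotomicField 4 ℚ)) := by
  apply RingOfIntegers.isPrincipalIdealRing_of_abs_discr_lt
  have : NeZero ((4 : ℕ) : ℚ) := ⟨by norm_num⟩
  have : IsCyclotomicExtension {2 ^ (1 + 1)} ℚ (CyclotomicField 4 ℚ) :=
    CyclotomicField.isCyclotomicExtension 4 ℚ
  have : IsCyclotomicExtension {4} ℚ (CyclotomicField 4 ℚ) :=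
    CyclotomicField.isCyclotomicExtension 4 ℚ
  have htot : Nat.totient 4 = 2 := by decide
  rw [IsCyclotomicExtension.Rat.discr_prime_pow_succ 2 1 (CyclotomicField 4 ℚ),
    IsCyclotomicExtension.finrank (n := 4) _ (cyclotomic.irreducible_rat (by simp)),
    IsCyclotomicExtension.Rat.nrComplexPlaces_eq_totient_div_two 4, htot]
  norm_num
  have := Real.pi_gt_three
  nlinarith

/-- If the ring of integers of the `n`-th cyclotomic field is principal, then a lattice with an
action of it splits as a sum of copies of this ring. -/
lemma exists_basis_of_aeval_cyclotomic (n : ℕ) [NeZero n]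
    [IsPrincipalIdealRing (𝓞 (CyclotomicField n ℚ))] {M : Type*} [AddCommGroup M] [Module ℤ M]
    [Module.Free ℤ M] [Module.Finite ℤ M] (f : End ℤ M) (hf : aeval f (cyclotomic n ℤ) = 0) :
    ∃ (m : ℕ) (v : Fin m → M) (e : Basis (Fin n.totient × Fin m) ℤ M),
      ∀ i j, e (i, j) = (f ^ (i : ℕ)) (v j) := by
  obtain rfl : ‹Module ℤ M› = AddCommGroup.toIntModule M := Subsingleton.elim _ _
  have : NeZero (n : ℚ) := ⟨Nat.cast_ne_zero.2 (NeZero.ne n)⟩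
  let K := CyclotomicField n ℚ
  have : IsCyclotomicExtension {n} ℚ K := CyclotomicField.isCyclotomicExtension n ℚ
  have hζ := IsCyclotomicExtension.zeta_spec n ℚ K
  let pb := hζ.integralPowerBasis
  have hmin : minpoly ℤ pb.gen = cyclotomic n ℤ := by
    rw [IsPrimitiveRoot.integralPowerBasis_gen, cyclotomic_eq_minpoly hζ (NeZero.pos n),
      ← RingOfIntegers.minpoly_coe]
    rfl
  let φ : 𝓞 K →ₐ[ℤ] End ℤ M := pb.lift f (by rw [hmin, hf])
  let _ : Module (𝓞 K) M := Module.compHom M φ.toRingHom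
  have hsmul (x : 𝓞 K) (y : M) : x • y = φ x y := rfl
  have : IsScalarTower ℤ (𝓞 K) M := ⟨fun k x y => by
    rw [hsmul, hsmul, map_smul, LinearMap.smul_apply]⟩
  have : Module.Finite (𝓞 K) M := Module.Finite.of_restrictScalars_finite ℤ _ _
  have : Module.IsTorsionFree (𝓞 K) M := by
    refine Module.IsTorsionFree.of_smul_eq_zero fun x y hxy => ?_
    by_contra! hne
    obtain ⟨k, hk, z, hz⟩ := (Algebra.IsAlgebraic.isAlgebraic (R := ℤ) x).exists_nonzero_dvd
      (mem_nonZeroDivisors_of_ne_zero hne.1)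
    have h1 : k • y = 0 := by
      rw [← algebraMap_smul (𝓞 K) k y, hz, mul_comm, mul_smul, hxy, smul_zero]
    exact (smul_eq_zero.1 h1).elim hk hne.2
  have : Module.Free (𝓞 K) M := Module.free_of_finite_type_torsion_free'
  let c := Module.finBasis (𝓞 K) M
  refine ⟨_, c, (pb.basis.smulTower c).reindex
    ((finCongr hζ.integralPowerBasis_dim).prodCongr (Equiv.refl _)), fun i j => ?_⟩
  simp [pb.coe_basis, hsmul, φ]

end Cyclotomic

section Lattices

open Polynomial NumberField

lemma exists_cyclic_basis (n d m : ℕ) [NeZero n]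
    [IsPrincipalIdealRing (𝓞 (CyclotomicField n ℚ))] {M : Type*} [AddCommGroup M] [Module ℤ M]
    [Module.Free ℤ M] [Module.Finite ℤ M] (f : End ℤ M) (hf : aeval f (cyclotomic n ℤ) = 0)
    (hn : n.totient = d) (hm : finrank ℤ M = d * m) :
    ∃ e : Basis (Fin d × Fin m) ℤ M,
      ∀ i (hi : i + 1 < d) j, e (⟨i + 1, hi⟩, j) = f (e (⟨i, Nat.lt_of_succ_lt hi⟩, j)) := by
  obtain ⟨k, v, e, he⟩ := exists_basis_of_aeval_cyclotomic n f hf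
  subst hn
  have hk : k = m := by
    rw [Module.finrank_eq_card_basis e] at hm
    simpa [Nat.totient_eq_zero, NeZero.ne n] using hm
  subst hk
  exact ⟨e, fun i hi j => by simp only [he, pow_succ']; rfl⟩

lemma represents_of_apply {M : Type*} [AddCommGroup M] [Module ℤ M] {h : End ℤ M}
    {A : Matrix (Fin 4) (Fin 4) ℤ} (e : Basis (Fin 4) ℤ M)
    (hA : ∀ j, h (e j) = ∑ i, A i j • e i) : Represents h A := by
  refine ⟨e, Matrix.ext fun i j => ?_⟩
  simp [LinearMap.toMatrix_apply, hA, Finsupp.single_apply]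

lemma ker_eq_bot_of_basis {R M : Type*} [CommRing R] [AddCommGroup M] [Module R M] {f : End R M}
    (b : Basis (Fin 0) R (LinearMap.ker f)) :
    LinearMap.ker f = ⊥ := by
  have := b.repr.toEquiv.subsingleton
  exact (Submodule.subsingleton_iff_eq_bot).1 this

variable {R M : Type*} [CommRing R] [IsDomain R] [IsPrincipalIdealRing R] [AddCommGroup M]
  [Module R M] [Module.Free R M] [Module.Finite R M]

/-- A basis of the kernel of an endomorphism of a lattice extends to the lattice. -/
lemma exists_basis_extending_ker (f : End R M) {r : ℕ} (b : Basis (Fin r) R (LinearMap.ker f)) :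
    ∃ (s : ℕ) (c : Basis (Fin r ⊕ Fin s) R M), ∀ i, c (.inl i) = b i := by
  have : Module.Free R (M ⧸ LinearMap.ker f) :=
    Module.Free.of_equiv f.quotKerEquivRange.symm
  exact ⟨_, b.sumQuot (Module.finBasis R (M ⧸ LinearMap.ker f)), fun i => by simp⟩

lemma exists_upper_triangular_basis (hM : finrank R M = 4) (h f : End R M)
    (hf : f * (h - 1) = 0) (b : Basis (Fin 2) R (LinearMap.ker f)) :
    ∃ (e : Basis (Fin 4) R M) (a₀ a₁ a₂ a₃ : R), e 0 = b 0 ∧ e 1 = b 1 ∧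
      h (e 2) = a₀ • e 0 + a₂ • e 1 + e 2 ∧ h (e 3) = a₁ • e 0 + a₃ • e 1 + e 3 := by
  obtain ⟨s, c, hc⟩ := exists_basis_extending_ker f b
  obtain rfl : s = 2 := by
    have := (Module.finrank_eq_card_basis c).symm.trans hM
    simp at this
    omega
  let e : Basis (Fin 4) R M := c.reindex finSumFinEquiv
  have he0 : e 0 = b 0 := (c.reindex_apply finSumFinEquiv 0).trans (hc 0)
  have he1 : e 1 = b 1 := (c.reindex_apply finSumFinEquiv 1).trans (hc 1)
  have hx (x : M) : ∃ α β : R, h x = α • e 0 + β • e 1 + x := by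
    have hmem : h x - x ∈ LinearMap.ker f := LinearMap.congr_fun hf x
    have := congrArg (LinearMap.ker f).subtype (b.sum_repr ⟨h x - x, hmem⟩)
    simp only [Fin.sum_univ_two, map_add, map_smul, Submodule.subtype_apply] at this
    exact ⟨_, _, by rw [he0, he1, this, sub_add_cancel]⟩
  obtain ⟨a₀, a₂, h2⟩ := hx (e 2)
  obtain ⟨a₁, a₃, h3⟩ := hx (e 3)
  exact ⟨e, a₀, a₁, a₂, a₃, he0, he1, h2, h3⟩

lemma le_finrank_of_basis_ker {f : End R M} {r : ℕ} (b : Basis (Fin r) R (LinearMap.ker f)) :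
    r ≤ finrank R M := by
  obtain ⟨s, c, -⟩ := exists_basis_extending_ker f b
  rw [Module.finrank_eq_card_basis c]
  simp

lemma eq_zero_of_basis_ker {f : End R M} {r : ℕ} (b : Basis (Fin r) R (LinearMap.ker f))
    (hr : finrank R M = r) : f = 0 := by
  obtain ⟨s, c, hc⟩ := exists_basis_extending_ker f b
  obtain rfl : s = 0 := by
    have := (Module.finrank_eq_card_basis c).symm.trans hr
    simp at this
    omega
  refine c.ext fun i => ?_
  obtain i | i := i
  · rw [hc]
    exact (b i).2
  · exact i.elim0

lemma det_of_mul_self_eq_one {h : End R M} (hh : h * h = 1) {r : ℕ}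
    (b : Basis (Fin r) R (LinearMap.ker (h + 1))) : LinearMap.det h = (-1) ^ r := by
  obtain ⟨s, c, hc⟩ := exists_basis_extending_ker _ b
  have hl (i : Fin r) : h (c (.inl i)) = -c (.inl i) := by
    rw [hc]
    exact eq_neg_of_add_eq_zero_left (b i).2
  have hr (j : Fin s) : ∃ x : Fin r → R, h (c (.inr j)) = ∑ i, x i • c (.inl i) + c (.inr j) := by
    have hmem : h (c (.inr j)) - c (.inr j) ∈ LinearMap.ker (h + 1) := by
      have := LinearMap.congr_fun hh (c (.inr j))
      simp only [Module.End.mul_apply, Module.End.one_apply] at this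
      simp [this]
    have := congrArg (LinearMap.ker (h + 1)).subtype (b.sum_repr ⟨_, hmem⟩)
    simp only [map_sum, map_smul, Submodule.subtype_apply] at this
    exact ⟨_, by simp only [hc]; rw [this, sub_add_cancel]⟩
  choose x hx using hr
  have hmat : LinearMap.toMatrix c c h =
      Matrix.fromBlocks (-1) (Matrix.of fun i j => x j i) 0 1 := by
    ext i j
    rw [LinearMap.toMatrix_apply]
    obtain j | j := j
    · rw [hl]
      obtain i | i := i <;> simp [Finsupp.single_apply, Matrix.one_apply, eq_comm]
    · rw [hx]
      obtain i | i := i <;> simp [Finsupp.single_apply, Matrix.one_apply, eq_comm]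
  rw [← LinearMap.det_toMatrix c, hmat, Matrix.det_fromBlocks_zero₂₁, Matrix.det_neg]
  simp

lemma exists_basis_of_mul_self_eq_one (hM : finrank R M = 4) {h : End R M} (hh : h * h = 1)
    (h1 : h ≠ 1) (h1' : h ≠ -1) (hdet : LinearMap.det h ≠ -1) :
    ∃ (e : Basis (Fin 4) R M) (a₀ a₁ a₂ a₃ : R), h (e 0) = -e 0 ∧ h (e 1) = -e 1 ∧
      h (e 2) = a₀ • e 0 + a₂ • e 1 + e 2 ∧ h (e 3) = a₁ • e 0 + a₃ • e 1 + e 3 := by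
  have hprod : (h + 1) * (h - 1) = 0 := by
    rw [add_mul, mul_sub, hh]
    simp
  obtain ⟨r, ⟨b⟩⟩ : ∃ r, Nonempty (Basis (Fin r) R (LinearMap.ker (h + 1))) :=
    ⟨_, ⟨Module.finBasis R _⟩⟩
  have hr := le_finrank_of_basis_ker b
  have hr4 : r ≠ 4 := by
    rintro rfl
    exact h1' (eq_neg_of_add_eq_zero_left (eq_zero_of_basis_ker b hM))
  have hr0 : r ≠ 0 := by
    rintro rfl
    refine h1 (sub_eq_zero.1 (LinearMap.ext fun x => ?_))
    have hx : (h - 1) x ∈ LinearMap.ker (h + 1) := LinearMap.congr_fun hprod x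
    rwa [ker_eq_bot_of_basis b] at hx
  have hodd : ¬ Odd r := fun hodd => hdet ((det_of_mul_self_eq_one hh b).trans hodd.neg_one_pow)
  obtain rfl : r = 2 := by
    rw [Nat.not_odd_iff_even] at hodd
    obtain ⟨k, rfl⟩ := hodd
    omega
  obtain ⟨e, a₀, a₁, a₂, a₃, h0, h1, h2, h3⟩ :=
    exists_upper_triangular_basis hM h (h + 1) hprod b
  refine ⟨e, a₀, a₁, a₂, a₃, ?_, ?_, h2, h3⟩
  · rw [h0]
    exact eq_neg_of_add_eq_zero_left (b 0).2
  · rw [h1]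
    exact eq_neg_of_add_eq_zero_left (b 1).2

end Lattices

section Classification

open Polynomial NumberField

/-- A basis of `M` indexed by pairs, in the order `(0,0), (1,0), (0,1), (1,1)`. -/
def pairBasis {M : Type*} [AddCommGroup M] [Module ℤ M] (e : Basis (Fin 2 × Fin 2) ℤ M) : Basis (Fin 4) ℤ M :=
  e.reindex ((Equiv.prodComm _ _).trans finProdFinEquiv)

lemma pairBasis_apply {M : Type*} [AddCommGroup M] [Module ℤ M]
    (e : Basis (Fin 2 × Fin 2) ℤ M) :
    pairBasis e 0 = e (0, 0) ∧ pairBasis e 1 = e (1, 0) ∧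
      pairBasis e 2 = e (0, 1) ∧ pairBasis e 3 = e (1, 1) := by
  refine ⟨?_, ?_, ?_, ?_⟩ <;> exact e.reindex_apply _ _

variable {M : Type*} [AddCommGroup M] [Module ℤ M] [Module.Free ℤ M] [Module.Finite ℤ M]
  {h : End ℤ M}

lemma hasInvariantGram_of_mul_self_eq_neg_one (hM : finrank ℤ M = 4) (hh : h * h = -1) :
    HasInvariantGram h !![0, 1, 0, 0; 1, 0, 0, 0; 0, 0, -2, 0; 0, 0, 0, -2] := by
  have := isPrincipalIdealRing_cyclotomicField_four
  have hcyc : cyclotomic 4 ℤ = X ^ 2 + 1 := by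
    have : cyclotomic (2 ^ (1 + 1)) ℤ = _ := cyclotomic_prime_pow_eq_geom_sum Nat.prime_two
    norm_num [Finset.sum_range_succ] at this
    rw [this, add_comm]
  obtain ⟨e, he⟩ := exists_cyclic_basis 4 2 2 h (by simp [hcyc, sq, hh]) (by decide) hM
  have hsq (x : M) : h (h x) = -x := LinearMap.congr_fun hh x
  have hj (j) : e (1, j) = h (e (0, j)) := he 0 (by norm_num) j
  obtain ⟨h0, h1, h2, h3⟩ := pairBasis_apply e
  refine hasInvariantGram_of_sq_eq_neg_one (represents_of_apply (pairBasis e) fun j => ?_)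
  fin_cases j <;> simp [Fin.sum_univ_four, h0, h1, h2, h3, hj, hsq]

lemma hasInvariantGram_of_mul_self_eq_one (hM : finrank ℤ M = 4) (hh : h * h = 1)
    (h1 : h ≠ 1) (h1' : h ≠ -1) (hdet : LinearMap.det h ≠ -1) :
    HasInvariantGram h !![0, 1; 1, 0] ∨ HasInvariantGram h !![0, 2; 2, 0] ∨
      HasInvariantGram h !![2, 0; 0, -2] := by
  obtain rfl : ‹Module ℤ M› = AddCommGroup.toIntModule M := Subsingleton.elim _ _
  obtain ⟨e, a₀, a₁, a₂, a₃, h0, h1, h2, h3⟩ := exists_basis_of_mul_self_eq_one hM hh h1 h1' hdet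
  refine hasInvariantGram_of_involutionMatrix (a := a₀) (b := a₁) (c := a₂) (d := a₃)
    (represents_of_apply e fun j => ?_)
  fin_cases j <;> simp [Fin.sum_univ_four, involutionMatrix, h0, h1, h2, h3]

lemma isPrincipalIdealRing_cyclotomicField_three :
    IsPrincipalIdealRing (𝓞 (CyclotomicField 3 ℚ)) := by
  have : NeZero ((3 : ℕ) : ℚ) := ⟨by norm_num⟩
  have : IsCyclotomicExtension {3} ℚ (CyclotomicField 3 ℚ) :=
    CyclotomicField.isCyclotomicExtension 3 ℚ
  exact IsCyclotomicExtension.Rat.three_pid (CyclotomicField 3 ℚ)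

lemma exists_basis_of_mul_self_add_self_add_one (hh : h * h + h + 1 = 0) :
    ∃ (m : ℕ) (e : Basis (Fin 2 × Fin m) ℤ M), ∀ j, e (1, j) = h (e (0, j)) := by
  have := isPrincipalIdealRing_cyclotomicField_three
  obtain ⟨m, v, e, he⟩ := exists_basis_of_aeval_cyclotomic 3 h
    (by simpa [cyclotomic_three, sq] using hh)
  have htot : Nat.totient 3 = 2 := by decide
  refine ⟨m, e.reindex ((finCongr htot).prodCongr (Equiv.refl _)), fun j => ?_⟩
  simp [he]

lemma exists_basis_ker_mul_self_add_self_add_one (h : End ℤ M) :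
    ∃ (m : ℕ) (e : @Basis (Fin 2 × Fin m) ℤ (LinearMap.ker (h * h + h + 1)) _ _
        (Submodule.module _)), ∀ j, (e (1, j) : M) = h (e (0, j)) := by
  have hker (x : M) (hx : x ∈ LinearMap.ker (h * h + h + 1)) :
      h x ∈ LinearMap.ker (h * h + h + 1) := by
    have hcomm : (h * h + h + 1) * h = h * (h * h + h + 1) := by noncomm_ring
    have := LinearMap.congr_fun hcomm x
    rw [Module.End.mul_apply, Module.End.mul_apply, LinearMap.mem_ker.1 hx, map_zero] at this
    exact this
  let : Module ℤ (LinearMap.ker (h * h + h + 1)) := Submodule.module _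
  let g : End ℤ (LinearMap.ker (h * h + h + 1)) := h.restrict hker
  obtain ⟨m, e, he⟩ := exists_basis_of_mul_self_add_self_add_one (h := g)
    (LinearMap.ext fun x => Subtype.ext x.2)
  exact ⟨m, e, fun j => congrArg Subtype.val (he j)⟩

lemma hasInvariantGram_of_cube_eq_one (hM : finrank ℤ M = 4) (hh : h ^ 3 = 1) (h1 : h ≠ 1) :
    HasInvariantGram h !![0, 1; 1, 0] ∨ HasInvariantGram h !![0, 3; 3, 0] ∨
      HasInvariantGram h !![0, 1, 0, 0; 1, 0, 0, 0; 0, 0, -2, -1; 0, 0, -1, -2] := by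
  obtain rfl : ‹Module ℤ M› = AddCommGroup.toIntModule M := Subsingleton.elim _ _
  have hsq (x : M) (hx : (h * h + h + 1) x = 0) : h (h x) = -x - h x := by
    simp only [LinearMap.add_apply, Module.End.mul_apply, Module.End.one_apply] at hx
    rw [eq_sub_iff_add_eq, eq_neg_iff_add_eq_zero, hx]
  by_cases hcyc : h * h + h + 1 = 0
  · have := isPrincipalIdealRing_cyclotomicField_three
    obtain ⟨e, he⟩ := exists_cyclic_basis 3 2 2 h
      (by simpa [cyclotomic_three, sq] using hcyc) (by decide) hM
    have hj (j) : e (1, j) = h (e (0, j)) := he 0 (by norm_num) j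
    have hsq (x : M) := hsq x (LinearMap.congr_fun hcyc x)
    obtain ⟨h0, h1, h2, h3⟩ := pairBasis_apply e
    refine .inr (.inr (hasInvariantGram_of_eisenstein (represents_of_apply (pairBasis e)
      fun j => ?_)))
    fin_cases j <;> simp [Fin.sum_univ_four, h0, h1, h2, h3, hj, hsq, sub_eq_add_neg]
  obtain ⟨m, b, hb⟩ := exists_basis_ker_mul_self_add_self_add_one h
  have hprod : (h * h + h + 1) * (h - 1) = 0 := by
    rw [← sub_eq_zero.2 hh]
    noncomm_ring
  have hle := le_finrank_of_basis_ker (b.reindex finProdFinEquiv)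
  have hm0 : m ≠ 0 := by
    rintro rfl
    refine h1 (sub_eq_zero.1 (LinearMap.ext fun x => ?_))
    have hx : (h - 1) x ∈ LinearMap.ker (h * h + h + 1) := LinearMap.congr_fun hprod x
    rwa [ker_eq_bot_of_basis (b.reindex finProdFinEquiv)] at hx
  have hm2 : m ≠ 2 := by
    rintro rfl
    exact hcyc (eq_zero_of_basis_ker (b.reindex finProdFinEquiv) hM)
  obtain rfl : m = 1 := by omega
  obtain ⟨e, a₀, a₁, a₂, a₃, h0, h1, h2, h3⟩ :=
    exists_upper_triangular_basis hM h _ hprod (b.reindex finProdFinEquiv)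
  have hb0 : b.reindex finProdFinEquiv (0 : Fin (2 * 1)) = b (0, 0) := b.reindex_apply _ _
  have hb1 : b.reindex finProdFinEquiv (1 : Fin (2 * 1)) = b (1, 0) := b.reindex_apply _ _
  replace h0 : e 0 = b (0, 0) := h0.trans (congrArg _ hb0)
  replace h1 : e 1 = h (e 0) := (h1.trans (congrArg _ hb1)).trans ((hb 0).trans (by rw [h0]))
  have h01 : h (h (e 0)) = -e 0 - h (e 0) := hsq _ (by rw [h0]; exact (b (0, 0)).2)
  have := hasInvariantGram_of_cubeMatrix (h := h) (a := a₀) (b := a₁) (c := a₂) (d := a₃)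
    (represents_of_apply e fun j => by
      fin_cases j <;>
        simp [Fin.sum_univ_four, cubeMatrix, h1, h2, h3, h01, sub_eq_add_neg])
  tauto

end Classification

section Quintic

open Polynomial NumberField

/-- A nontrivial rational matrix of prime order `p` is annihilated by `Φ_p` when its size is at
most `p - 1`, and its size is at least `p - 1`. -/
lemma le_and_aeval_cyclotomic_of_pow_eq_one {n p : ℕ} (hp : p.Prime) {A : Matrix (Fin n) (Fin n) ℚ}
    (hA : A ^ p = 1) (hA1 : A ≠ 1) :
    p ≤ n + 1 ∧ (n + 1 ≤ p → aeval A (cyclotomic p ℚ) = 0) := by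
  have : Fact p.Prime := ⟨hp⟩
  have hirr : Irreducible (cyclotomic p ℚ) := cyclotomic.irreducible_rat hp.pos
  have hdvd : minpoly ℚ A ∣ cyclotomic p ℚ * (X - 1) := by
    rw [cyclotomic_prime_mul_X_sub_one]
    exact minpoly.dvd _ _ (by simp [hA])
  have hmin : cyclotomic p ℚ ∣ minpoly ℚ A := by
    by_contra hndvd
    have := ((hirr.coprime_iff_not_dvd).2 hndvd).symm.dvd_of_dvd_mul_left hdvd
    refine hA1 (sub_eq_zero.1 ?_)
    simpa using (minpoly.dvd_iff).1 this
  have hchar : cyclotomic p ℚ ∣ A.charpoly := hmin.trans (Matrix.minpoly_dvd_charpoly A)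
  have hdeg : (cyclotomic p ℚ).natDegree = p - 1 := by
    rw [natDegree_cyclotomic, Nat.totient_prime hp]
  have hle := natDegree_le_of_dvd hchar A.charpoly_monic.ne_zero
  rw [hdeg, Matrix.charpoly_natDegree_eq_dim, Fintype.card_fin] at hle
  refine ⟨by omega, fun hn => ?_⟩
  have := eq_of_monic_of_dvd_of_natDegree_le (cyclotomic.monic p ℚ) A.charpoly_monic hchar
    (by rw [hdeg, Matrix.charpoly_natDegree_eq_dim, Fintype.card_fin]; omega)
  rw [← this]
  exact Matrix.aeval_self_charpoly A

/-- The matrix of an endomorphism in the basis `e`, as a ring homomorphism. -/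
def matrixHom {R M : Type*} [CommRing R] [AddCommGroup M] [Module R M] {n : ℕ}
    (e : Basis (Fin n) R M) : End R M →+* Matrix (Fin n) (Fin n) R :=
  (LinearMap.toMatrixAlgEquiv e).toRingEquiv.toRingHom

lemma matrixHom_injective {R M : Type*} [CommRing R] [AddCommGroup M] [Module R M] {n : ℕ}
    (e : Basis (Fin n) R M) : Function.Injective (matrixHom e) :=
  (LinearMap.toMatrixAlgEquiv e).injective

variable {M : Type*} [AddCommGroup M] [Module ℤ M] [Module.Free ℤ M] [Module.Finite ℤ M]
  {h : End ℤ M}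

lemma eq_five_and_sum_pow_eq_zero (hM : finrank ℤ M = 4) {p : ℕ} (hp : p.Prime) (hp5 : 5 ≤ p)
    (hh : h ^ p = 1) (h1 : h ≠ 1) : p = 5 ∧ ∑ i ∈ Finset.range 5, h ^ i = 0 := by
  let e := Module.finBasisOfFinrankEq ℤ M hM
  let φ : End ℤ M →+* Matrix (Fin 4) (Fin 4) ℚ :=
    (Int.castRingHom ℚ).mapMatrix.comp (matrixHom e)
  have hφ : Function.Injective φ :=
    (Matrix.map_injective Int.cast_injective).comp (matrixHom_injective e)
  obtain ⟨hle, hsum⟩ := le_and_aeval_cyclotomic_of_pow_eq_one hp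
    (by rw [← map_pow, hh, map_one]) (fun h => h1 (hφ (h.trans (map_one φ).symm)))
  obtain rfl : p = 5 := by omega
  refine ⟨rfl, hφ ?_⟩
  have := Fact.mk Nat.prime_five
  simpa [cyclotomic_prime] using hsum le_rfl

lemma hasInvariantGram_of_sum_pow_eq_zero (hM : finrank ℤ M = 4)
    (hh : ∑ i ∈ Finset.range 5, h ^ i = 0) : HasInvariantGram h !![2, 1; 1, -2] := by
  have : NeZero ((5 : ℕ) : ℚ) := ⟨by norm_num⟩
  have : IsCyclotomicExtension {5} ℚ (CyclotomicField 5 ℚ) :=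
    CyclotomicField.isCyclotomicExtension 5 ℚ
  have := IsCyclotomicExtension.Rat.five_pid (CyclotomicField 5 ℚ)
  have := Fact.mk Nat.prime_five
  obtain ⟨c, hc⟩ := exists_cyclic_basis 5 4 1 h (by simpa [cyclotomic_prime] using hh)
    (by decide) hM
  let e : Basis (Fin 4) ℤ M := c.reindex (Equiv.prodUnique (Fin 4) (Fin 1))
  have he (i : Fin 4) : e i = c (i, 0) := c.reindex_apply _ _
  have h1 : e 1 = h (e 0) := by simp only [he]; exact hc 0 (by norm_num) 0
  have h2 : e 2 = h (h (e 0)) := by rw [← h1]; simp only [he]; exact hc 1 (by norm_num) 0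
  have h3 : e 3 = h (h (h (e 0))) := by rw [← h2]; simp only [he]; exact hc 2 (by norm_num) 0
  have h4 : h (h (h (h (e 0)))) = -e 0 - e 1 - e 2 - e 3 := by
    have := LinearMap.congr_fun hh (e 0)
    simp [Finset.sum_range_succ, pow_succ] at this
    rw [h1, h2, h3, ← sub_eq_zero, ← this]
    abel
  refine hasInvariantGram_of_quintic (represents_of_apply e fun j => ?_)
  fin_cases j <;> simp [Fin.sum_univ_four, h1, h2, h3, h4, sub_eq_add_neg]

end Quintic

section Torus

variable {Λ : Submodule ℤ (ℂ × ℂ)} {σ : (ℂ × ℂ) ≃ₗ[ℂ] (ℂ × ℂ)}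

lemma nonempty_basis (hΛ : IsComplexTorusLattice Λ) :
    Nonempty (Basis (Fin 4) ℤ Λ) := by
  obtain ⟨b, rfl⟩ := hΛ
  exact ⟨b.restrictScalars ℤ⟩

lemma det_latRestrict_nonneg (hΛ : IsComplexTorusLattice Λ) (hσ : PreservesLattice σ Λ) :
    0 ≤ LinearMap.det (latRestrict σ Λ hσ).toLinearMap := by
  obtain ⟨b, rfl⟩ := hΛ
  let e := b.restrictScalars ℤ
  have hmat : (LinearMap.toMatrix e e (latRestrict σ _ hσ).toLinearMap).map (Int.cast : ℤ → ℝ) =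
      LinearMap.toMatrix b b ((σ : (ℂ × ℂ) →ₗ[ℂ] (ℂ × ℂ)).restrictScalars ℝ) := by
    ext i j
    simp only [Matrix.map_apply, LinearMap.toMatrix_apply]
    refine (b.restrictScalars_repr_apply ℤ _ i).trans ?_
    exact congrArg (fun x => b.repr (σ x) i) (b.restrictScalars_apply ℤ j)
  have hdet : ((LinearMap.det (latRestrict σ _ hσ).toLinearMap : ℤ) : ℝ) =
      Complex.normSq (LinearMap.det (σ : (ℂ × ℂ) →ₗ[ℂ] (ℂ × ℂ))) := by
    rw [← Algebra.norm_complex_apply, ← LinearMap.det_restrictScalars,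
      ← LinearMap.det_toMatrix e, ← LinearMap.det_toMatrix b, ← hmat]
    exact (Int.castRingHom ℝ).map_det _
  exact_mod_cast hdet ▸ Complex.normSq_nonneg _

lemma exists_isWedgeForm {g : End ℤ Λ} {n : ℕ} {G : Matrix (Fin n) (Fin n) ℤ}
    (hg : HasInvariantGram g G) :
    ∃ vol : ⋀[ℤ]^4 ↥Λ, Submodule.span ℤ {vol} = ⊤ ∧
      ∃ b : ⋀[ℤ]^2 ↥Λ →ₗ[ℤ] ⋀[ℤ]^2 ↥Λ →ₗ[ℤ] ℤ, IsWedgeForm Λ vol b ∧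
        HasGramMatrix b (LinearMap.ker (extPowMap 2 g - LinearMap.id)) G := by
  obtain ⟨e, he⟩ := hg
  refine ⟨volume e, span_volume e, wedgeForm e, fun x y => ?_, he⟩
  rw [wedgeForm_apply, coe_mul_coe e]

end Torus

section Classification

variable {M : Type*} [AddCommGroup M] [Module ℤ M] {g : End ℤ M}

lemma HasInvariantGram.of_neg {n : ℕ} {G : Matrix (Fin n) (Fin n) ℤ}
    (hg : HasInvariantGram (-g) G) : HasInvariantGram g G := by
  simpa only [HasInvariantGram, extPowMap_two_neg] using hg

/-- Either `g` or `-g` has order dividing an odd number `p` if the exterior square of `g` does. -/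
lemma exists_sign_pow_eq_one (e : Basis (Fin 4) ℤ M) {p : ℕ} (hp : Odd p)
    (hg : (extPowMap 2 g ^ p : End ℤ (⋀[ℤ]^2 M)) = 1)
    (hg1 : extPowMap 2 g ≠ (1 : End ℤ (⋀[ℤ]^2 M))) :
    ∃ h : End ℤ M, h ^ p = 1 ∧ h ≠ 1 ∧ (h = g ∨ h = -g) := by
  have h1 : extPowMap 2 (1 : End ℤ M) = (1 : End ℤ (⋀[ℤ]^2 M)) := extPowMap_one 2
  rw [← extPowMap_pow] at hg
  obtain h | h := eq_one_or_neg_one_of_extPowMap_two e _ hg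
  · exact ⟨g, h, by rintro rfl; exact hg1 h1, .inl rfl⟩
  · refine ⟨-g, by rw [hp.neg_pow, h, neg_neg], fun h' => hg1 ?_, .inr rfl⟩
    rw [← extPowMap_two_neg, h', h1]

theorem hasInvariantGram_of_orderOf [Module.Free ℤ M] [Module.Finite ℤ M]
    (hM : finrank ℤ M = 4) (hdet : LinearMap.det g ≠ -1) {p : ℕ} (hp : p.Prime)
    (hg : orderOf (extPowMap 2 g : End ℤ (⋀[ℤ]^2 M)) = p) :
    (p = 2 ∧ (HasInvariantGram g !![0, 1; 1, 0] ∨ HasInvariantGram g !![0, 2; 2, 0] ∨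
      HasInvariantGram g !![2, 0; 0, -2] ∨
      HasInvariantGram g !![0, 1, 0, 0; 1, 0, 0, 0; 0, 0, -2, 0; 0, 0, 0, -2])) ∨
    (p = 3 ∧ (HasInvariantGram g !![0, 1; 1, 0] ∨ HasInvariantGram g !![0, 3; 3, 0] ∨
      HasInvariantGram g !![0, 1, 0, 0; 1, 0, 0, 0; 0, 0, -2, -1; 0, 0, -1, -2])) ∨
    (p = 5 ∧ HasInvariantGram g !![2, 1; 1, -2]) := by
  let e := Module.finBasisOfFinrankEq ℤ M hM
  have hpow : (extPowMap 2 g ^ p : End ℤ (⋀[ℤ]^2 M)) = 1 := hg ▸ pow_orderOf_eq_one _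
  have hne : extPowMap 2 g ≠ (1 : End ℤ (⋀[ℤ]^2 M)) := fun h =>
    hp.one_lt.ne' (hg.symm.trans (orderOf_eq_one_iff.2 h))
  obtain rfl | hodd := hp.eq_two_or_odd'
  · have h1 : extPowMap 2 (1 : End ℤ M) = (1 : End ℤ (⋀[ℤ]^2 M)) := extPowMap_one 2
    rw [← extPowMap_pow, sq] at hpow
    obtain h | h := eq_one_or_neg_one_of_extPowMap_two e _ hpow
    · have := hasInvariantGram_of_mul_self_eq_one hM h (by rintro rfl; exact hne h1)
        (by rintro rfl; exact hne ((extPowMap_two_neg 1).trans h1)) hdet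
      tauto
    · exact .inl ⟨rfl, .inr (.inr (.inr (hasInvariantGram_of_mul_self_eq_neg_one hM h)))⟩
  obtain ⟨h, hh, hh1, hhg⟩ := exists_sign_pow_eq_one e hodd hpow hne
  have transfer {n : ℕ} {G : Matrix (Fin n) (Fin n) ℤ} (hG : HasInvariantGram h G) :
      HasInvariantGram g G := by
    obtain rfl | rfl := hhg
    exacts [hG, hG.of_neg]
  obtain rfl | h3 := eq_or_ne p 3
  · exact .inr (.inl ⟨rfl, (hasInvariantGram_of_cube_eq_one hM hh hh1).imp transfer
      (.imp transfer transfer)⟩)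
  · have hp2 := hp.two_le
    have hp4 : p ≠ 4 := by rintro rfl; exact absurd hodd (by decide)
    have hp2' : p ≠ 2 := by rintro rfl; exact absurd hodd (by decide)
    obtain ⟨rfl, hsum⟩ := eq_five_and_sum_pow_eq_zero hM hp (by omega) hh hh1
    exact .inr (.inr ⟨rfl, transfer (hasInvariantGram_of_sum_pow_eq_zero hM hsum)⟩)

end Classification

end WedgeLattice

/-- Classification of invariant lattices of non-symplectic automorphisms of prime order of
`2`-tori: `T(G_σ)` is isometric to `U`, `U(2)`, `⟨2⟩⊕⟨-2⟩` or `U⊕⟨-2⟩⊕⟨-2⟩` if `p = 2`,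
to `U`, `U(3)` or `U⊕A₂(-1)` if `p = 3`, and to `H₅` if `p = 5`. -/
theorem stmt_6 (Λ : Submodule ℤ (ℂ × ℂ)) (hΛ : IsComplexTorusLattice Λ)
    (σ : (ℂ × ℂ) ≃ₗ[ℂ] (ℂ × ℂ)) (hord : IsOfFinOrder σ) (hσΛ : PreservesLattice σ Λ)
    (hns : LinearMap.det (σ : (ℂ × ℂ) →ₗ[ℂ] (ℂ × ℂ)) ≠ 1)
    (p : ℕ) (hp : p.Prime) (hordp : orderOf (extSq σ Λ hσΛ) = p) :
    ∃ vol : ⋀[ℤ]^4 ↥Λ, Submodule.span ℤ {vol} = ⊤ ∧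
      ∃ b : ⋀[ℤ]^2 ↥Λ →ₗ[ℤ] ⋀[ℤ]^2 ↥Λ →ₗ[ℤ] ℤ, IsWedgeForm Λ vol b ∧
        ((p = 2 ∧
            (HasGramMatrix b (invLat σ Λ hσΛ) !![0, 1; 1, 0] ∨
             HasGramMatrix b (invLat σ Λ hσΛ) !![0, 2; 2, 0] ∨
             HasGramMatrix b (invLat σ Λ hσΛ) !![2, 0; 0, -2] ∨
             HasGramMatrix b (invLat σ Λ hσΛ)
               !![0, 1, 0, 0; 1, 0, 0, 0; 0, 0, -2, 0; 0, 0, 0, -2])) ∨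
         (p = 3 ∧
            (HasGramMatrix b (invLat σ Λ hσΛ) !![0, 1; 1, 0] ∨
             HasGramMatrix b (invLat σ Λ hσΛ) !![0, 3; 3, 0] ∨
             HasGramMatrix b (invLat σ Λ hσΛ)
               !![0, 1, 0, 0; 1, 0, 0, 0; 0, 0, -2, -1; 0, 0, -1, -2])) ∨
         (p = 5 ∧ HasGramMatrix b (invLat σ Λ hσΛ) !![2, 1; 1, -2])) := by
  obtain ⟨e⟩ := WedgeLattice.nonempty_basis hΛ
  have := Module.Free.of_basis e
  have := Module.Finite.of_basis e
  have hM : finrank ℤ Λ = 4 := by simp [Module.finrank_eq_card_basis e]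
  have hdet : LinearMap.det (latRestrict σ Λ hσΛ).toLinearMap ≠ -1 := fun h => by
    have := WedgeLattice.det_latRestrict_nonneg hΛ hσΛ
    omega
  have wedge {n : ℕ} {G : Matrix (Fin n) (Fin n) ℤ}
      (hG : WedgeLattice.HasInvariantGram (latRestrict σ Λ hσΛ).toLinearMap G) :=
    WedgeLattice.exists_isWedgeForm hG
  obtain ⟨hp2, h⟩ | ⟨hp3, h⟩ | ⟨hp5, h⟩ :=
    WedgeLattice.hasInvariantGram_of_orderOf hM hdet hp hordp
  · obtain h | h | h | h := h <;>
    · obtain ⟨vol, hvol, b, hb, hG⟩ := wedge h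
      exact ⟨vol, hvol, b, hb, .inl ⟨hp2, by unfold invLat extSq; tauto⟩⟩
  · obtain h | h | h := h <;>
    · obtain ⟨vol, hvol, b, hb, hG⟩ := wedge h
      exact ⟨vol, hvol, b, hb, .inr (.inl ⟨hp3, by unfold invLat extSq; tauto⟩)⟩
  · obtain ⟨vol, hvol, b, hb, hG⟩ := wedge h
    exact ⟨vol, hvol, b, hb, .inr (.inr ⟨hp5, hG⟩)⟩
end
end

section
/- Let Λ₁ and Λ₂ be ℤ-lattices in ℂ (discrete rank-2 subgroups spanning ℂ over ℝ), let Λ = Λ₁ × Λ₂ ⊆ ℂ², and let σ be the ℂ-linear automorphism σ(z,w) = (z, −w) of ℂ². Then σ(Λ) = Λ, σ is non-symplectic of order 2, and for any generator vol of ⋀⁴Λ the fixed submodule {x ∈ ⋀²Λ : ⋀²(σ|_Λ)(x) = x}, with the restriction of the wedge form determined by vol, is isometric to the hyperbolic plane U. -/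
set_option synthInstance.maxHeartbeats 1000000
set_option maxHeartbeats 1000000

open ExteriorAlgebra Module Matrix

noncomputable section

lemma extPowMap_ιMulti_family_of_diagonal {I R N : Type*} [LinearOrder I] [CommRing R]
    [AddCommGroup N] [Module R N] {n : ℕ} {f : N →ₗ[R] N} {v : I → N} {ε : I → R}
    (hf : ∀ i, f (v i) = ε i • v i) (s : Set.powersetCard I n) :
    extPowMap n f (exteriorPower.ιMulti_family R n v s) =
      (∏ i ∈ (s : Finset I), ε i) • exteriorPower.ιMulti_family R n v s := by
  have hprod : ∏ i ∈ (s : Finset I), ε i =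
      ∏ i, ε (Set.powersetCard.ofFinEmbEquiv.symm s i) := by
    rw [← Finset.map_orderEmbOfFin_univ (s : Finset I) s.2, Finset.prod_map]
    rfl
  apply Subtype.ext
  change ExteriorAlgebra.map f (ExteriorAlgebra.ιMulti R n _) = _
  rw [ExteriorAlgebra.map_apply_ιMulti, hprod]
  simp only [Function.comp_def, hf]
  exact AlternatingMap.map_smul_univ _ _ _

lemma repr_extPowMap_of_diagonal {I R N : Type*} [LinearOrder I] [CommRing R]
    [AddCommGroup N] [Module R N] {n : ℕ} {f : N →ₗ[R] N} (e : Basis I R N) {ε : I → R}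
    (hf : ∀ i, f (e i) = ε i • e i) (s : Set.powersetCard I n) (x : ⋀[R]^n N) :
    (e.exteriorPower n).repr (extPowMap n f x) s =
      (∏ i ∈ (s : Finset I), ε i) * (e.exteriorPower n).repr x s := by
  suffices h : (e.exteriorPower n).coord s ∘ₗ extPowMap n f =
      (∏ i ∈ (s : Finset I), ε i) • (e.exteriorPower n).coord s from
    LinearMap.congr_fun h x
  refine (e.exteriorPower n).ext fun t => ?_
  rw [LinearMap.comp_apply, exteriorPower.basis_apply, extPowMap_ιMulti_family_of_diagonal hf,
    ← exteriorPower.basis_apply, map_smul, LinearMap.smul_apply]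
  simp only [Basis.coord_apply, Basis.repr_self, smul_eq_mul]
  by_cases h : t = s
  · rw [h]
  · simp [h]

lemma ExteriorAlgebra.commute_ιMulti_two {R N : Type*} [CommRing R]
    [AddCommGroup N] [Module R N] (v w : Fin 2 → N) :
    Commute (ExteriorAlgebra.ιMulti R 2 v) (ExteriorAlgebra.ιMulti R 2 w) := by
  have swap (a b : N) : ι R a * ι R b = -(ι R b * ι R a) :=
    eq_neg_of_add_eq_zero_left (ExteriorAlgebra.ι_add_mul_swap a b)
  have key (a c d : N) : ι R a * (ι R c * ι R d) = ι R c * ι R d * ι R a := by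
    rw [← mul_assoc, swap a c, neg_mul, mul_assoc, swap a d, mul_neg, neg_neg, mul_assoc]
  simp only [ExteriorAlgebra.ιMulti_succ_apply, ExteriorAlgebra.ιMulti_zero_apply, mul_one]
  exact Commute.mul_left (key _ _ _) (key _ _ _)

/-- In a free module of rank one, every generator is a unit multiple of a basis vector. -/
lemma Module.Basis.exists_unit_smul_eq_of_span_eq_top {ι R N : Type*} [Unique ι] [CommRing R]
    [AddCommGroup N] [Module R N] (B : Basis ι R N) {v : N} (hv : Submodule.span R {v} = ⊤) :
    ∃ k : Rˣ, B default = k • v := by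
  obtain ⟨k, hk⟩ := Submodule.mem_span_singleton.1 (hv ▸ Submodule.mem_top : B default ∈ _)
  have h := congrArg (fun x => B.repr x default) hk
  simp only [map_smul, Finsupp.smul_apply, smul_eq_mul, Basis.repr_self,
    Finsupp.single_eq_same] at h
  exact ⟨Units.mkOfMulEqOne _ _ h, hk.symm⟩

/-- The index of `e₀ ∧ e₁` in the basis of `⋀²` of a rank four module. -/
def wedgeIndexLeft : Set.powersetCard (Fin 4) 2 := ⟨{0, 1}, rfl⟩

/-- The index of `e₂ ∧ e₃` in the basis of `⋀²` of a rank four module. -/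
def wedgeIndexRight : Set.powersetCard (Fin 4) 2 := ⟨{2, 3}, rfl⟩

/-- If `f = diag(1, 1, -1, -1)` on a free module of rank four, then the `⋀²f`-invariants of `⋀²M`
with the wedge form are a hyperbolic plane. -/
theorem hasGramMatrix_hyperbolic_of_diagonal {M : Type*} [AddCommGroup M]
    (e : Basis (Fin 4) ℤ M) (f : M →ₗ[ℤ] M)
    (hf : ∀ i, f (e i) = (![1, 1, -1, -1] : Fin 4 → ℤ) i • e i)
    {vol : ⋀[ℤ]^4 M} (hvol : Submodule.span ℤ {vol} = ⊤)
    (b : ⋀[ℤ]^2 M →ₗ[ℤ] ⋀[ℤ]^2 M →ₗ[ℤ] ℤ)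
    (hb : ∀ x y : ⋀[ℤ]^2 M, (x : ExteriorAlgebra ℤ M) * (y : ExteriorAlgebra ℤ M) =
      b x y • (vol : ExteriorAlgebra ℤ M)) :
    HasGramMatrix b (LinearMap.ker (extPowMap 2 f - LinearMap.id)) !![0, 1; 1, 0] := by
  set T := LinearMap.ker (extPowMap 2 f - LinearMap.id)
  set u := exteriorPower.ιMulti_family ℤ 2 e wedgeIndexLeft with hu
  set w := exteriorPower.ιMulti_family ℤ 2 e wedgeIndexRight with hw
  have huT : u ∈ T := by
    rw [LinearMap.mem_ker, LinearMap.sub_apply, hu, extPowMap_ιMulti_family_of_diagonal hf]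
    simp [wedgeIndexLeft]
  have hwT : w ∈ T := by
    rw [LinearMap.mem_ker, LinearMap.sub_apply, hw, extPowMap_ιMulti_family_of_diagonal hf]
    simp [wedgeIndexRight]
  have hT : T ≤ Submodule.span ℤ {u, w} := by
    intro x hx
    have hfix : extPowMap 2 f x = x := sub_eq_zero.1 hx
    rw [← (e.exteriorPower 2).sum_repr x]
    refine Submodule.sum_mem _ fun s _ => ?_
    rw [exteriorPower.basis_apply]
    have hs : (s : Finset (Fin 4)) = {0, 1} ∨ (s : Finset (Fin 4)) = {2, 3} ∨
        ∏ i ∈ (s : Finset (Fin 4)), (![1, 1, -1, -1] : Fin 4 → ℤ) i = -1 := by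
      have : ∀ t : Finset (Fin 4), t.card = 2 → t = {0, 1} ∨ t = {2, 3} ∨
        ∏ i ∈ t, (![1, 1, -1, -1] : Fin 4 → ℤ) i = -1 := by decide
      exact this s s.2
    rcases hs with hs | hs | hs
    · rw [show s = wedgeIndexLeft from Subtype.ext hs]
      exact Submodule.smul_mem _ _ (Submodule.subset_span (by simp [hu]))
    · rw [show s = wedgeIndexRight from Subtype.ext hs]
      exact Submodule.smul_mem _ _ (Submodule.subset_span (by simp [hw]))
    · have h := repr_extPowMap_of_diagonal e hf s x
      rw [hfix, hs] at h
      rw [show (e.exteriorPower 2).repr x s = 0 by lia, zero_smul]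
      exact Submodule.zero_mem _
  let : Unique (Set.powersetCard (Fin 4) 4) :=
    { default := ⟨Finset.univ, rfl⟩
      uniq := fun s => Subtype.ext ((Finset.card_eq_iff_eq_univ _).1 s.2) }
  obtain ⟨k, hk⟩ := (e.exteriorPower 4).exists_unit_smul_eq_of_span_eq_top hvol
  have := (e.exteriorPower 4).isTorsionFree
  have hvol0 : vol ≠ 0 := by
    rintro rfl
    exact (e.exteriorPower 4).ne_zero default (by simpa using hk)
  have b_eq {x y : ⋀[ℤ]^2 M} {c : ℤ}
      (h : (x : ExteriorAlgebra ℤ M) * (y : ExteriorAlgebra ℤ M) =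
        c • (vol : ExteriorAlgebra ℤ M)) : b x y = c := by
    have h' : b x y • vol = c • vol := Subtype.ext ((hb x y).symm.trans h)
    exact smul_left_injective ℤ hvol0 h'
  have huu : b u u = 0 := b_eq <| by
    rw [zero_smul]
    exact ExteriorAlgebra.ιMulti_family_mul_of_not_disjoint ℤ e wedgeIndexLeft wedgeIndexLeft
      (by decide)
  have hww : b w w = 0 := b_eq <| by
    rw [zero_smul]
    exact ExteriorAlgebra.ιMulti_family_mul_of_not_disjoint ℤ e wedgeIndexRight wedgeIndexRight
      (by decide)
  have hdisj : Disjoint wedgeIndexLeft.val wedgeIndexRight.val := by decide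
  obtain ⟨δ, huw⟩ : ∃ δ : ℤˣ, b u w = δ := by
    refine ⟨Equiv.Perm.sign (Set.powersetCard.permOfDisjoint hdisj) * k, b_eq ?_⟩
    have h := ExteriorAlgebra.ιMulti_family_mul_of_disjoint ℤ e wedgeIndexLeft wedgeIndexRight
      hdisj
    have hk' := congrArg Subtype.val hk
    rw [exteriorPower.basis_apply] at hk'
    refine h.trans ?_
    rw [Unique.eq_default (Set.powersetCard.disjUnion hdisj), Units.val_mul, mul_smul]
    exact congrArg _ hk'
  have hwu : b w u = δ := by
    refine b_eq ?_
    rw [← huw, ← hb]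
    exact ExteriorAlgebra.commute_ιMulti_two _ _
  have hδ : (δ : ℤ) * δ = 1 := Int.units_coe_mul_self δ
  let v : Fin 2 → T := ![⟨u, huT⟩, ⟨(δ : ℤ) • w, T.smul_mem _ hwT⟩]
  have hv : ∀ i j, b (v i : ⋀[ℤ]^2 M) (v j : ⋀[ℤ]^2 M) = !![0, 1; 1, 0] i j := by
    intro i j
    fin_cases i <;> fin_cases j <;> simp [v, huu, hww, huw, hwu, hδ]
  have hli : LinearIndependent ℤ v := by
    refine (Fintype.linearIndependent_iff (R := ℤ) (v := v)).2 fun c hc => ?_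
    have hc' : c 0 • (v 0 : ⋀[ℤ]^2 M) + c 1 • (v 1 : ⋀[ℤ]^2 M) = 0 := by
      simpa [Fin.sum_univ_two] using congrArg Subtype.val hc
    have h0 := congrArg (fun x => b x (v 0)) hc'
    have h1 := congrArg (fun x => b x (v 1)) hc'
    simp only [map_add, map_smul, LinearMap.add_apply, LinearMap.smul_apply, hv, map_zero,
      LinearMap.zero_apply] at h0 h1
    simp only [Fin.forall_fin_two]
    exact ⟨by simpa using h1, by simpa using h0⟩
  have hspan : ⊤ ≤ Submodule.span ℤ (Set.range v) := by
    rintro ⟨x, hx⟩ -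
    obtain ⟨s, t, hst⟩ := Submodule.mem_span_pair.1 (hT hx)
    have : (⟨x, hx⟩ : T) = s • v 0 + (t * δ) • v 1 := by
      apply Subtype.ext
      simp [v, ← hst, smul_smul, mul_assoc, hδ]
    rw [this]
    exact Submodule.add_mem _ (Submodule.smul_mem _ _ (Submodule.subset_span ⟨0, rfl⟩))
      (Submodule.smul_mem _ _ (Submodule.subset_span ⟨1, rfl⟩))
  refine ⟨Basis.mk hli hspan, fun i j => ?_⟩
  rw [Basis.mk_apply, Basis.mk_apply]
  exact hv i j

/-- The product of two submodules is linearly equivalent to the submodule `p.prod q`. -/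
def Submodule.prodEquivProd {R M N : Type*} [Semiring R] [AddCommMonoid M] [Module R M]
    [AddCommMonoid N] [Module R N] (p : Submodule R M) (q : Submodule R N) :
    (p × q) ≃ₗ[R] p.prod q where
  toFun x := ⟨(x.1, x.2), x.1.2, x.2.2⟩
  invFun x := (⟨x.1.1, x.2.1⟩, ⟨x.1.2, x.2.2⟩)
  map_add' _ _ := rfl
  map_smul' _ _ := rfl
  left_inv _ := rfl
  right_inv _ := rfl

/-- For the product `Λ = Λ₁ × Λ₂` of two lattices in `ℂ` and the automorphism
`σ(z,w) = (z,-w)` of `ℂ²`: `σ` preserves `Λ`, is non-symplectic of order 2, and for any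
generator `vol` of `⋀⁴Λ` the invariant lattice, with the wedge form determined by `vol`,
is isometric to the hyperbolic plane `U`. -/
theorem stmt_14 (Λ₁ Λ₂ : Submodule ℤ ℂ)
    (h₁ : ∃ b : Basis (Fin 2) ℝ ℂ, Λ₁ = Submodule.span ℤ (Set.range b))
    (h₂ : ∃ b : Basis (Fin 2) ℝ ℂ, Λ₂ = Submodule.span ℤ (Set.range b))
    (Λ : Submodule ℤ (ℂ × ℂ)) (hΛ : Λ = Λ₁.prod Λ₂)
    (σ : (ℂ × ℂ) ≃ₗ[ℂ] (ℂ × ℂ)) (hσ : ∀ z w : ℂ, σ (z, w) = (z, -w)) :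
    PreservesLattice σ Λ ∧
    LinearMap.det (σ : (ℂ × ℂ) →ₗ[ℂ] (ℂ × ℂ)) ≠ 1 ∧
    orderOf σ = 2 ∧
    ∀ (h : PreservesLattice σ Λ) (vol : ⋀[ℤ]^4 ↥Λ), Submodule.span ℤ {vol} = ⊤ →
      ∀ b : ⋀[ℤ]^2 ↥Λ →ₗ[ℤ] ⋀[ℤ]^2 ↥Λ →ₗ[ℤ] ℤ, IsWedgeForm Λ vol b →
        HasGramMatrix b (invLat σ Λ h) !![0, 1; 1, 0] := by
  subst hΛ
  have hσσ (x : ℂ × ℂ) : σ (σ x) = x := by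
    rw [← Prod.mk.eta (p := x), hσ, hσ, neg_neg]
  have hmem {x : ℂ × ℂ} (hx : x ∈ Λ₁.prod Λ₂) : σ x ∈ Λ₁.prod Λ₂ := by
    rw [← Prod.mk.eta (p := x), hσ]
    exact ⟨hx.1, Λ₂.neg_mem hx.2⟩
  refine ⟨?_, ?_, ?_, ?_⟩
  · apply le_antisymm
    · rintro _ ⟨x, hx, rfl⟩
      exact hmem hx
    · exact fun x hx => ⟨σ x, hmem hx, hσσ x⟩
  · have h : (σ : (ℂ × ℂ) →ₗ[ℂ] (ℂ × ℂ)) =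
        LinearMap.prodMap LinearMap.id (-LinearMap.id) :=
      LinearMap.ext fun x => hσ x.1 x.2
    rw [h, LinearMap.det_prodMap, LinearMap.det_id, one_mul, LinearMap.det_ring]
    norm_num
  · refine orderOf_eq_prime (LinearEquiv.ext fun x => ?_) fun h => ?_
    · rw [pow_two]
      exact hσσ x
    · have := congrArg Prod.snd (LinearEquiv.congr_fun h (0, 1))
      rw [hσ] at this
      norm_num at this
  · intro h vol hvol b hb
    obtain ⟨b₁, rfl⟩ := h₁
    obtain ⟨b₂, rfl⟩ := h₂
    let e := (((b₁.restrictScalars ℤ).prod (b₂.restrictScalars ℤ)).map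
      (Submodule.prodEquivProd _ _)).reindex finSumFinEquiv
    refine hasGramMatrix_hyperbolic_of_diagonal e _ (fun i => ?_) hvol b hb
    obtain ⟨i, rfl⟩ := (finSumFinEquiv (m := 2) (n := 2)).surjective i
    have hε : ∀ j : Fin 2 ⊕ Fin 2, (![1, 1, -1, -1] : Fin 4 → ℤ) (finSumFinEquiv j) =
        Sum.elim (fun _ => 1) (fun _ => -1) j := by decide
    apply Subtype.ext
    change σ (e _) = _
    rw [hε, Basis.reindex_apply, Equiv.symm_apply_apply]
    rcases i with i | i <;> simp [Submodule.prodEquivProd, hσ]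
end
end

section
/- Let Λ = ℤ[i] × ℤ[i] ⊆ ℂ² (Gaussian integers in each coordinate) and let σ be the ℂ-linear automorphism of ℂ² given by multiplication by i in both coordinates. Then σ(Λ) = Λ, σ has order 4, the induced map ⋀²(σ|_Λ) has order 2, and there exists a generator vol of ⋀⁴Λ such that the fixed submodule {x ∈ ⋀²Λ : ⋀²(σ|_Λ)(x) = x}, with the restriction of the wedge form determined by vol, is isometric to U⊕⟨−2⟩⊕⟨−2⟩. -/
set_option synthInstance.maxHeartbeats 1000000
set_option maxHeartbeats 1000000

open ExteriorAlgebra Module Matrix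

noncomputable section

section RankFour

variable {R M : Type*} [CommRing R] [AddCommGroup M] [Module R M]

lemma extPowMap_ιMulti {N : Type*} [AddCommGroup N] [Module R N] (n : ℕ) (f : M →ₗ[R] N)
    (v : Fin n → M) :
    extPowMap n f (exteriorPower.ιMulti R n v) = exteriorPower.ιMulti R n (f ∘ v) := by
  apply Subtype.ext
  exact ExteriorAlgebra.map_apply_ιMulti f v

/-- The wedge product `x ∧ y` as an element of `⋀²M`. -/
def wedge (x y : M) : ⋀[R]^2 M := exteriorPower.ιMulti R 2 ![x, y]

lemma coe_wedge (x y : M) :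
    ((wedge x y : ⋀[R]^2 M) : ExteriorAlgebra R M) = ι R x * ι R y := by
  simp [wedge, ExteriorAlgebra.ιMulti_apply]

lemma wedge_self (x : M) : (wedge x x : ⋀[R]^2 M) = 0 :=
  Subtype.ext (by simp [coe_wedge])

lemma wedge_swap (x y : M) : (wedge x y : ⋀[R]^2 M) = -wedge y x :=
  Subtype.ext (by
    simpa [coe_wedge] using
      eq_neg_of_add_eq_zero_left (ExteriorAlgebra.ι_add_mul_swap (R := R) x y))

lemma wedge_neg_left (x y : M) : (wedge (-x) y : ⋀[R]^2 M) = -wedge x y :=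
  Subtype.ext (by simp [coe_wedge])

lemma wedge_neg_right (x y : M) : (wedge x (-y) : ⋀[R]^2 M) = -wedge x y :=
  Subtype.ext (by simp [coe_wedge])

lemma extPowMap_wedge {N : Type*} [AddCommGroup N] [Module R N] (f : M →ₗ[R] N) (x y : M) :
    extPowMap 2 f (wedge x y) = (wedge (f x) (f y) : ⋀[R]^2 N) := by
  rw [wedge, extPowMap_ιMulti, wedge]
  congr 1
  ext i
  fin_cases i <;> rfl

/-- The `(i, j)` Plücker coordinate on `⋀²M` with respect to a basis of `M`. -/
def plucker {I : Type*} (b : Basis I R M) (i j : I) : ⋀[R]^2 M →ₗ[R] R :=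
  exteriorPower.pairingDual R M 2 (exteriorPower.ιMulti R 2 ![b.coord i, b.coord j])

lemma plucker_wedge {I : Type*} (b : Basis I R M) (i j : I) (x y : M) :
    plucker b i j (wedge x y) =
      b.repr x i * b.repr y j - b.repr x j * b.repr y i := by
  simp [plucker, wedge, exteriorPower.pairingDual_ιMulti_ιMulti, Matrix.det_fin_two]

lemma exists_eq_wedge_combination (b : Basis (Fin 4) R M) (x : ⋀[R]^2 M) :
    ∃ c : Fin 6 → R, x = c 0 • wedge (b 0) (b 1) + c 1 • wedge (b 0) (b 2)
      + c 2 • wedge (b 0) (b 3) + c 3 • wedge (b 1) (b 2) + c 4 • wedge (b 1) (b 3)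
      + c 5 • wedge (b 2) (b 3) := by
  have hx : x ∈ Submodule.span R
      (exteriorPower.ιMulti R 2 '' {a | Set.range a ⊆ Set.range b}) := by
    rw [exteriorPower.ιMulti_span_of_span R 2 M b.span_eq]; trivial
  induction hx using Submodule.span_induction with
  | mem y hy =>
    obtain ⟨v, hv, rfl⟩ := hy
    obtain ⟨i, hi⟩ := hv ⟨0, rfl⟩
    obtain ⟨j, hj⟩ := hv ⟨1, rfl⟩
    have h : exteriorPower.ιMulti R 2 v = wedge (b i) (b j) := by
      rw [wedge, hi, hj]
      congr 1
      ext k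
      fin_cases k <;> rfl
    rw [h]
    wlog hij : i ≤ j generalizing i j v
    · obtain ⟨c, hc⟩ := this ![v 1, v 0] (by
        rintro _ ⟨k, rfl⟩
        fin_cases k
        · exact ⟨j, hj⟩
        · exact ⟨i, hi⟩) j hj i hi (by
          rw [wedge, hi, hj]) (by omega)
      refine ⟨-c, ?_⟩
      rw [wedge_swap, hc]
      simp only [Pi.neg_apply]
      module
    fin_cases i <;> fin_cases j <;> first
      | (exfalso; revert hij; decide)
      | (refine ⟨0, ?_⟩; simp [wedge_self]; done)
      | (refine ⟨Pi.single 0 1, ?_⟩; simp; done)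
      | (refine ⟨Pi.single 1 1, ?_⟩; simp; done)
      | (refine ⟨Pi.single 2 1, ?_⟩; simp; done)
      | (refine ⟨Pi.single 3 1, ?_⟩; simp; done)
      | (refine ⟨Pi.single 4 1, ?_⟩; simp; done)
      | (refine ⟨Pi.single 5 1, ?_⟩; simp)
  | zero => exact ⟨0, by simp⟩
  | add x y _ _ hx hy =>
    obtain ⟨c, rfl⟩ := hx
    obtain ⟨d, rfl⟩ := hy
    exact ⟨c + d, by simp only [Pi.add_apply, add_smul]; abel⟩
  | smul r x _ hx =>
    obtain ⟨c, rfl⟩ := hx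
    exact ⟨r • c, by simp only [Pi.smul_apply, smul_add, smul_smul, smul_eq_mul]⟩

lemma span_singleton_ιMulti_basis {n : ℕ} (b : Basis (Fin n) R M) :
    Submodule.span R {exteriorPower.ιMulti R n b} = ⊤ := by
  rw [eq_top_iff, ← exteriorPower.ιMulti_span, Submodule.span_le]
  rintro _ ⟨v, rfl⟩
  have h : exteriorPower.ιMulti R n v = b.det v • exteriorPower.ιMulti R n b := by
    have h' : exteriorPower.ιMulti R n
        = (LinearMap.toSpanSingleton R _ (exteriorPower.ιMulti R n b)).compAlternatingMap b.det :=
      Basis.ext_alternating b fun w hw => by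
        obtain ⟨τ, rfl⟩ : ∃ τ : Equiv.Perm (Fin n), w = τ :=
          ⟨Equiv.ofBijective w (Finite.injective_iff_bijective.1 hw), rfl⟩
        have key := AlternatingMap.map_perm (exteriorPower.ιMulti R n) b τ
        have key' := AlternatingMap.map_perm b.det b τ
        simp only [Function.comp_def, Basis.det_self] at key key'
        simpa [key, key', Units.smul_def] using (Int.cast_smul_eq_zsmul R _ _).symm
    exact DFunLike.congr_fun h' v
  exact Submodule.mem_span_singleton.2 ⟨_, h.symm⟩

lemma smul_ιMulti_basis_injective {n : ℕ} (b : Basis (Fin n) R M) :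
    Function.Injective fun r : R => r • ExteriorAlgebra.ιMulti R n b := by
  intro r s h
  have h' : r • exteriorPower.ιMulti R n b = s • exteriorPower.ιMulti R n b := Subtype.ext h
  simpa [Basis.det_self] using congrArg (exteriorPower.alternatingMapLinearEquiv b.det) h'

variable (b : Basis (Fin 4) R M) (J : M →ₗ[R] M)

/-- A basis of the part of `⋀²M` fixed by a complex structure which maps
`b 0 ↦ b 1` and `b 2 ↦ b 3`. -/
def invariantWedges : Fin 4 → ⋀[R]^2 M :=
  ![wedge (b 0) (b 1), wedge (b 2) (b 3), wedge (b 0) (b 2) + wedge (b 1) (b 3),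
    wedge (b 0) (b 3) - wedge (b 1) (b 2)]

lemma linearIndependent_invariantWedges : LinearIndependent R (invariantWedges b) := by
  refine LinearIndependent.of_pairwise_dual_eq_zero_one _
    ![plucker b 0 1, plucker b 2 3, plucker b 0 2, plucker b 0 3] ?_ ?_
  · intro i j hij
    fin_cases i <;> fin_cases j <;>
      first
      | exact absurd rfl hij
      | simp [invariantWedges, plucker_wedge]
  · intro i
    fin_cases i <;> simp [invariantWedges, plucker_wedge]

lemma invariantWedges_mul (i j : Fin 4) :
    (invariantWedges b i : ExteriorAlgebra R M) * invariantWedges b j =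
      ((!![0, 1, 0, 0; 1, 0, 0, 0; 0, 0, -2, 0; 0, 0, 0, -2] : Matrix _ _ ℤ) i j) •
        ExteriorAlgebra.ιMulti R 4 b := by
  have hsq (k : Fin 4) : ι R (b k) * ι R (b k) = 0 := ExteriorAlgebra.ι_sq_zero _
  have hswap (k l : Fin 4) : ι R (b k) * ι R (b l) = -(ι R (b l) * ι R (b k)) :=
    eq_neg_of_add_eq_zero_left (ExteriorAlgebra.ι_add_mul_swap _ _)
  have hsq' (k : Fin 4) (z : ExteriorAlgebra R M) : ι R (b k) * (ι R (b k) * z) = 0 := by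
    rw [← mul_assoc, hsq, zero_mul]
  have hswap' (k l : Fin 4) (z : ExteriorAlgebra R M) :
      ι R (b k) * (ι R (b l) * z) = -(ι R (b l) * (ι R (b k) * z)) := by
    rw [← mul_assoc, hswap, neg_mul, mul_assoc]
  have hvol : ExteriorAlgebra.ιMulti R 4 b
      = ι R (b 0) * (ι R (b 1) * (ι R (b 2) * ι R (b 3))) := by
    simp [ExteriorAlgebra.ιMulti_apply]
    rfl
  rw [hvol]
  fin_cases i <;> fin_cases j <;>
    simp [invariantWedges, coe_wedge, mul_add, add_mul, mul_sub, sub_mul, mul_assoc, hsq, hsq',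
      hswap 2 1, hswap 3 1, hswap 3 2,
      hswap' 1 0, hswap' 2 0, hswap' 3 0, hswap' 2 1, hswap' 3 1, hswap' 3 2] 
  · noncomm_ring
  · noncomm_ring

variable {b J}

lemma mem_span_invariantWedges (h0 : J (b 0) = b 1) (h1 : J (b 1) = -b 0) (h2 : J (b 2) = b 3)
    (h3 : J (b 3) = -b 2) {x : ⋀[R]^2 M} :
    extPowMap 2 J x = x ↔ x ∈ Submodule.span R (Set.range (invariantWedges b)) := by
  constructor
  · intro hx
    obtain ⟨c, rfl⟩ := exists_eq_wedge_combination b x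
    simp only [map_add, map_smul, extPowMap_wedge, h0, h1, h2, h3, wedge_neg_left,
      wedge_neg_right] at hx
    have h02 := congrArg (plucker b 0 2) hx
    have h03 := congrArg (plucker b 0 3) hx
    simp [plucker_wedge] at h02 h03
    rw [Submodule.mem_span_range_iff_exists_fun]
    refine ⟨![c 0, c 5, c 1, c 2], ?_⟩
    simp [Fin.sum_univ_four, invariantWedges, h02, ← h03]
    module
  · intro hx
    induction hx using Submodule.span_induction with
    | mem y hy =>
      obtain ⟨i, rfl⟩ := hy
      fin_cases i <;>
        simp [invariantWedges, extPowMap_wedge, h0, h1, h2, h3, wedge_neg_left, wedge_neg_right]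
      · rw [wedge_swap, neg_neg]
      · rw [wedge_swap, neg_neg]
      · abel
      · abel
    | zero => simp
    | add x y _ _ hx hy => rw [map_add, hx, hy]
    | smul r x _ hx => rw [map_smul, hx]

lemma orderOf_extPowMap_two [Nontrivial R] (h0 : J (b 0) = b 1) (h2 : J (b 2) = b 3)
    (hJ : ∀ x, J (J x) = -x) :
    orderOf (extPowMap 2 J : Module.End R (⋀[R]^2 M)) = 2 := by
  apply orderOf_eq_prime
  · apply exteriorPower.linearMap_ext
    ext v
    have hv : J ∘ J ∘ v = fun i => (-1 : R) • v i := by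
      ext i
      simp [hJ]
    simp only [LinearMap.compAlternatingMap_apply, pow_two, Module.End.mul_apply,
      Module.End.one_apply, extPowMap_ιMulti]
    rw [hv, AlternatingMap.map_smul_univ (exteriorPower.ιMulti R 2) (fun _ => (-1 : R)) v]
    simp
  · intro h
    have := congrArg (plucker b 0 2) (LinearMap.congr_fun h (wedge (b 0) (b 2)))
    simp [extPowMap_wedge, h0, h2, plucker_wedge] at this

end RankFour

/-- The product of two copies of the Gaussian integers has the obvious `ℤ`-basis. -/
lemma exists_basis_gaussian_prod : ∃ b : Basis (Fin 4) ℤ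
    ((Submodule.span ℤ ({1, Complex.I} : Set ℂ)).prod (Submodule.span ℤ ({1, Complex.I} : Set ℂ))),
    (b 0 : ℂ × ℂ) = (1, 0) ∧ (b 1 : ℂ × ℂ) = (Complex.I, 0) ∧ (b 2 : ℂ × ℂ) = (0, 1) ∧
      (b 3 : ℂ × ℂ) = (0, Complex.I) := by
  set S := Submodule.span ℤ ({1, Complex.I} : Set ℂ)
  have h1 : (1 : ℂ) ∈ S := Submodule.subset_span (by simp)
  have hI : Complex.I ∈ S := Submodule.subset_span (by simp)
  let v : Fin 4 → S.prod S := ![⟨(1, 0), h1, S.zero_mem⟩, ⟨(Complex.I, 0), hI, S.zero_mem⟩,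
    ⟨(0, 1), S.zero_mem, h1⟩, ⟨(0, Complex.I), S.zero_mem, hI⟩]
  have hli : LinearIndependent ℤ v := by
    rw [Fintype.linearIndependent_iff]
    intro g hg
    have hg' := congrArg (Subtype.val : S.prod S → ℂ × ℂ) hg
    simp [v, Fin.sum_univ_four, Prod.ext_iff, Complex.ext_iff] at hg'
    intro i
    fin_cases i <;> simp [hg']
  have hsp : ⊤ ≤ Submodule.span ℤ (Set.range v) := by
    rintro ⟨⟨z, w⟩, hz, hw⟩ -
    obtain ⟨a, b, rfl⟩ := Submodule.mem_span_pair.1 hz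
    obtain ⟨c, d, rfl⟩ := Submodule.mem_span_pair.1 hw
    rw [Submodule.mem_span_range_iff_exists_fun]
    refine ⟨![a, b, c, d], Subtype.ext ?_⟩
    simp [v, Fin.sum_univ_four]
  exact ⟨Basis.mk hli hsp, by simp [v], by simp [v], by simp [v], by simp [v]⟩

/-- For `Λ = ℤ[i] × ℤ[i]` and `σ` the multiplication by `i` in both coordinates: `σ`
preserves `Λ`, has order 4, the induced map `⋀²(σ|_Λ)` has order 2, and for a suitable
generator `vol` of `⋀⁴Λ` the invariant lattice, with the wedge form determined by `vol`,
is isometric to `U ⊕ ⟨-2⟩ ⊕ ⟨-2⟩`. -/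
theorem stmt_15 (Λ : Submodule ℤ (ℂ × ℂ))
    (hΛ : Λ = (Submodule.span ℤ ({1, Complex.I} : Set ℂ)).prod
        (Submodule.span ℤ ({1, Complex.I} : Set ℂ)))
    (σ : (ℂ × ℂ) ≃ₗ[ℂ] (ℂ × ℂ))
    (hσ : ∀ z w : ℂ, σ (z, w) = (Complex.I * z, Complex.I * w)) :
    PreservesLattice σ Λ ∧
    orderOf σ = 4 ∧
    ∀ (h : PreservesLattice σ Λ),
      orderOf (extSq σ Λ h) = 2 ∧
      ∃ vol : ⋀[ℤ]^4 ↥Λ, Submodule.span ℤ {vol} = ⊤ ∧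
        ∀ b : ⋀[ℤ]^2 ↥Λ →ₗ[ℤ] ⋀[ℤ]^2 ↥Λ →ₗ[ℤ] ℤ, IsWedgeForm Λ vol b →
          HasGramMatrix b (invLat σ Λ h)
            !![0, 1, 0, 0; 1, 0, 0, 0; 0, 0, -2, 0; 0, 0, 0, -2] := by
  have hσσ (x : ℂ × ℂ) : σ (σ x) = -x := by
    obtain ⟨z, w⟩ := x
    simp [hσ, ← mul_assoc]
  refine ⟨?_, ?_, fun h => ?_⟩
  · have hS : ∀ z ∈ Submodule.span ℤ ({1, Complex.I} : Set ℂ),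
        Complex.I * z ∈ Submodule.span ℤ ({1, Complex.I} : Set ℂ) := by
      intro z hz
      obtain ⟨a, b, rfl⟩ := Submodule.mem_span_pair.1 hz
      refine Submodule.mem_span_pair.2 ⟨-b, a, ?_⟩
      apply Complex.ext <;> simp
    have hmem : ∀ x ∈ Λ, σ x ∈ Λ := by
      rintro ⟨z, w⟩ hx
      rw [hΛ] at hx ⊢
      rw [hσ]
      exact ⟨hS z hx.1, hS w hx.2⟩
    apply le_antisymm
    · rintro _ ⟨x, hx, rfl⟩
      exact hmem x hx
    · intro x hx
      exact ⟨-σ x, Λ.neg_mem (hmem x hx), by simp [hσσ]⟩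
  · refine orderOf_eq_prime_pow (p := 2) (n := 1) ?_ ?_
    · intro h
      have := LinearEquiv.congr_fun h (1, 0)
      simp [pow_two, hσσ, Prod.ext_iff, Complex.ext_iff] at this
      norm_num at this
    · ext x : 1
      simp [pow_succ, hσσ]
  · obtain ⟨b, hb0, hb1, hb2, hb3⟩ : ∃ b : Basis (Fin 4) ℤ Λ, (b 0 : ℂ × ℂ) = (1, 0) ∧
        (b 1 : ℂ × ℂ) = (Complex.I, 0) ∧ (b 2 : ℂ × ℂ) = (0, 1) ∧
        (b 3 : ℂ × ℂ) = (0, Complex.I) := by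
      subst hΛ
      exact exists_basis_gaussian_prod
    set J : Λ →ₗ[ℤ] Λ := (latRestrict σ Λ h).toLinearMap with hJ_def
    have hJ (x : Λ) : (J x : ℂ × ℂ) = σ x := rfl
    have h0 : J (b 0) = b 1 := Subtype.ext (by simp [hJ, hb0, hb1, hσ])
    have h1 : J (b 1) = -b 0 := Subtype.ext (by simp [hJ, hb0, hb1, hσ])
    have h2 : J (b 2) = b 3 := Subtype.ext (by simp [hJ, hb2, hb3, hσ])
    have h3 : J (b 3) = -b 2 := Subtype.ext (by simp [hJ, hb2, hb3, hσ])
    refine ⟨orderOf_extPowMap_two h0 h2 fun x => Subtype.ext (hσσ x), exteriorPower.ιMulti ℤ 4 b,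
      span_singleton_ιMulti_basis b, fun B hB => ?_⟩
    have hT : Submodule.span ℤ (Set.range (invariantWedges b)) = invLat σ Λ h := by
      ext x
      rw [← mem_span_invariantWedges h0 h1 h2 h3, invLat, LinearMap.mem_ker, LinearMap.sub_apply,
        sub_eq_zero]
      rfl
    refine ⟨(Basis.span (linearIndependent_invariantWedges b)).map (LinearEquiv.ofEq _ _ hT),
      fun i j => smul_ιMulti_basis_injective b ?_⟩
    simp only [Basis.map_apply, LinearEquiv.coe_ofEq_apply, Basis.span_apply]
    exact (hB _ _).symm.trans (invariantWedges_mul b i j)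
end
end
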